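/- arXiv:1502.03365 — 2 statements merged into one kernel-verified Lean document; each statement's English description precedes it below -/
import Mathlib

section
/- Let ℙ_n denote the distribution of the observed labeled graph (G, L) under the labeled stochastic block model 𝒢(n, a/n, b/n, μ, ν). For any fixed integer m ≥ 3, under ℙ_n the family of random variables {X_n([ℓ]_k) : [ℓ]_k ∈ 𝓛^k, 3 ≤ k ≤ m} converges jointly in distribution, as n → ∞, to a family of independent Poisson random variables, where the limit variable corresponding to [ℓ]_k = (ℓ₁,…,ℓ_k) has mean ξ([ℓ]_k) = (1/(2^{k+1}·k))·[∏_{i=1}^k (a·μ(ℓ_i) + b·ν(ℓ_i)) + ∏_{i=1}^k (a·μ(ℓ_i) − b·ν(ℓ_i))]. -/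
open Finset Filter Real

namespace LSBM

/-- Ordered pairs `u < v` of vertices. -/
abbrev Pairs (n : ℕ) := {p : Fin n × Fin n // p.1 < p.2}

/-- A labeled-graph configuration: each pair `u < v` carries `none` (no edge)
or `some ℓ` (an edge with label `ℓ`). -/
abbrev EdgeConf (n : ℕ) (L : Type*) := Pairs n → Option L

variable {L : Type*}

/-- The label (if any) on the edge between `u` and `v`. -/
def getLabel {n : ℕ} (E : EdgeConf n L) (u v : Fin n) : Option L :=
  if h : u < v then E ⟨(u, v), h⟩ else if h' : v < u then E ⟨(v, u), h'⟩ else none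

/-- Per-pair mass under the labeled stochastic block model. -/
noncomputable def sbmPairMass (n : ℕ) (a b : ℝ) (μ ν : L → ℝ) (same : Bool) : Option L → ℝ
  | none => if same then 1 - a / n else 1 - b / n
  | some ℓ => if same then (a / n) * μ ℓ else (b / n) * ν ℓ

/-- Joint mass of a (type assignment, labeled graph) outcome under the labeled SBM. -/
noncomputable def sbmMass (n : ℕ) (a b : ℝ) (μ ν : L → ℝ)
    (x : (Fin n → Bool) × EdgeConf n L) : ℝ :=
  (1 / 2 : ℝ) ^ n *
    ∏ p : Pairs n, sbmPairMass n a b μ ν (x.1 p.1.1 == x.1 p.1.2) (x.2 p)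

/-- Probability of an event under the labeled SBM (joint in types and graph). -/
noncomputable def sbmProb [Fintype L] (n : ℕ) (a b : ℝ) (μ ν : L → ℝ)
    (A : Set ((Fin n → Bool) × EdgeConf n L)) : ℝ :=
  ∑ x : (Fin n → Bool) × EdgeConf n L, A.indicator (sbmMass n a b μ ν) x

/-- Probability of a labeled-graph event under the labeled SBM (marginal over types). -/
noncomputable def sbmGraphProb [Fintype L] (n : ℕ) (a b : ℝ) (μ ν : L → ℝ)
    (A : Set (EdgeConf n L)) : ℝ :=
  sbmProb n a b μ ν {x | x.2 ∈ A}

/-- Conditional (given the type assignment `σ`) probability of a labeled-graph event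
under the labeled SBM. -/
noncomputable def sbmCondProb [Fintype L] (n : ℕ) (a b : ℝ) (μ ν : L → ℝ)
    (σ : Fin n → Bool) (A : Set (EdgeConf n L)) : ℝ :=
  ∑ E : EdgeConf n L, A.indicator
    (fun E' => ∏ p : Pairs n, sbmPairMass n a b μ ν (σ p.1.1 == σ p.1.2) (E' p)) E

/-- Conditional (given `σ`) expectation of a function of the labeled graph. -/
noncomputable def sbmCondExp [Fintype L] (n : ℕ) (a b : ℝ) (μ ν : L → ℝ)
    (σ : Fin n → Bool) (f : EdgeConf n L → ℝ) : ℝ :=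
  ∑ E : EdgeConf n L,
    (∏ p : Pairs n, sbmPairMass n a b μ ν (σ p.1.1 == σ p.1.2) (E p)) * f E

/-- Per-pair mass under the labeled Erdős–Rényi model. -/
noncomputable def erPairMass (n : ℕ) (a b : ℝ) (μ ν : L → ℝ) : Option L → ℝ
  | none => 1 - (a + b) / (2 * n)
  | some ℓ => ((a + b) / (2 * n)) * ((a * μ ℓ + b * ν ℓ) / (a + b))

/-- Mass of a labeled graph under the labeled Erdős–Rényi model. -/
noncomputable def erMass [Fintype L] (n : ℕ) (a b : ℝ) (μ ν : L → ℝ) (E : EdgeConf n L) : ℝ :=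
  ∏ p : Pairs n, erPairMass n a b μ ν (E p)

/-- Probability of a labeled-graph event under the labeled Erdős–Rényi model. -/
noncomputable def erProb [Fintype L] (n : ℕ) (a b : ℝ) (μ ν : L → ℝ)
    (A : Set (EdgeConf n L)) : ℝ :=
  ∑ E : EdgeConf n L, A.indicator (erMass n a b μ ν) E

/-- Expectation of a function of the labeled graph under the labeled Erdős–Rényi model. -/
noncomputable def erExp [Fintype L] (n : ℕ) (a b : ℝ) (μ ν : L → ℝ)
    (f : EdgeConf n L → ℝ) : ℝ :=
  ∑ E : EdgeConf n L, erMass n a b μ ν E * f E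

/-- `μ` is a probability distribution on the (finite) label set. -/
def IsProbVec [Fintype L] (μ : L → ℝ) : Prop := (∀ ℓ, 0 ≤ μ ℓ) ∧ ∑ ℓ, μ ℓ = 1

/-- The reconstruction-threshold parameter `τ`. -/
noncomputable def tau [Fintype L] (a b : ℝ) (μ ν : L → ℝ) : ℝ :=
  ∑ ℓ, (a * μ ℓ - b * ν ℓ) ^ 2 / (2 * (a * μ ℓ + b * ν ℓ))

/-- The weighted adjacency matrix `W` with `W u v = A u v * w (L u v)`. -/
def Wmat {n : ℕ} (w : L → ℝ) (E : EdgeConf n L) : Matrix (Fin n) (Fin n) ℝ :=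
  fun u v => match getLabel E u v with
    | none => 0
    | some ℓ => w ℓ

/-- The ±1 vector associated with a Boolean type assignment (`true ↦ +1`). -/
def signVec {n : ℕ} (σ : Fin n → Bool) : Fin n → ℝ := fun u => if σ u then 1 else -1

/-- `x` is a vector with entries in `{±1}`. -/
def IsSignVec {n : ℕ} (x : Fin n → ℝ) : Prop := ∀ u, x u = 1 ∨ x u = -1

/-- Componentwise sign of a real vector. -/
noncomputable def signR {n : ℕ} (x : Fin n → ℝ) : Fin n → ℝ :=
  fun u => if 0 ≤ x u then 1 else -1

open Classical in
/-- Hamming distance between two vectors. -/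
noncomputable def hamming {n : ℕ} (x y : Fin n → ℝ) : ℕ :=
  (univ.filter fun u => x u ≠ y u).card

/-- The overlap `Q(x, y) = 1/2 - (1/n) min(d(x,y), d(x,-y))`. -/
noncomputable def overlap (n : ℕ) (x y : Fin n → ℝ) : ℝ :=
  1 / 2 - (1 / n) * min (hamming x y : ℝ) (hamming x (-y) : ℝ)

open Classical in
/-- The weight of the cut induced by a ±1 assignment `σ`:
`∑_{(u,v) : u < v, σ_u ≠ σ_v} W_{uv}`. -/
noncomputable def cutWeight {n : ℕ} (w : L → ℝ) (E : EdgeConf n L) (σ : Fin n → ℝ) : ℝ :=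
  ∑ p : Pairs n, if σ p.1.1 ≠ σ p.1.2 then Wmat w E p.1.1 p.1.2 else 0

/-- The quadratic form `xᵀ M x`. -/
def quadForm {n : ℕ} (M : Matrix (Fin n) (Fin n) ℝ) (x : Fin n → ℝ) : ℝ :=
  ∑ u, ∑ v, x u * M u v * x v

/-- The entrywise inner product `⟨A, B⟩ = ∑_{u,v} A u v * B u v`. -/
def mInner {n : ℕ} (A B : Matrix (Fin n) (Fin n) ℝ) : ℝ :=
  ∑ u, ∑ v, A u v * B u v

/-- The degree of a vertex. -/
def degree {n : ℕ} (E : EdgeConf n L) (u : Fin n) : ℕ :=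
  (univ.filter fun v => (getLabel E u v).isSome).card

open Classical in
/-- The weighted adjacency matrix of the graph obtained by removing all edges incident
to vertices of degree larger than `(3/2)·(a+b)/2`. -/
noncomputable def prunedW {n : ℕ} (a b : ℝ) (w : L → ℝ) (E : EdgeConf n L) :
    Matrix (Fin n) (Fin n) ℝ :=
  fun u v =>
    if (degree E u : ℝ) ≤ (3 / 2) * ((a + b) / 2) ∧
       (degree E v : ℝ) ≤ (3 / 2) * ((a + b) / 2)
    then Wmat w E u v else 0

/-- The conditional (given `σ`) entrywise expectation `E[W | σ]` of the weighted
adjacency matrix. -/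
noncomputable def condEW {n : ℕ} [Fintype L] (a b : ℝ) (μ ν w : L → ℝ)
    (σ : Fin n → Bool) : Matrix (Fin n) (Fin n) ℝ :=
  fun u v =>
    if u = v then 0
    else if σ u = σ v then (a / n) * ∑ ℓ, μ ℓ * w ℓ
    else (b / n) * ∑ ℓ, ν ℓ * w ℓ

/-- The matrix `D' = W' - (α/n) J` used in the spectral method, where
`α = (1/2)·∑_ℓ w(ℓ)(aμ(ℓ)+bν(ℓ))` and `J` is the all-one matrix. -/
noncomputable def Dmat {n : ℕ} [Fintype L] (a b : ℝ) (μ ν w : L → ℝ)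
    (E : EdgeConf n L) : Matrix (Fin n) (Fin n) ℝ :=
  fun u v => prunedW a b w E u v - ((1 / 2) * ∑ ℓ, w ℓ * (a * μ ℓ + b * ν ℓ)) / n

/-- The spectral norm (ℓ²-operator norm) of a real square matrix. -/
noncomputable def specNorm {n : ℕ} (M : Matrix (Fin n) (Fin n) ℝ) : ℝ :=
  ‖Matrix.toEuclideanCLM (𝕜 := ℝ) M‖

/-- The number of `k`-cycles carrying the label sequence `ℓ`, in the canonical
orientation: starting from the minimal-index vertex of the cycle toward its
neighbor of smaller index. -/
def cycleCount [DecidableEq L] (n k : ℕ) (E : EdgeConf n L) (ℓ : Fin k → L) : ℕ :=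
  if hk : 0 < k then
    haveI : NeZero k := ⟨hk.ne'⟩
    (univ.filter fun c : Fin k → Fin n =>
      Function.Injective c ∧ (∀ i, c 0 ≤ c i) ∧
      c 1 < c ⟨k - 1, Nat.sub_lt hk one_pos⟩ ∧
      ∀ i : Fin k, getLabel E (c i) (c (i + 1)) = some (ℓ i)).card
  else 0

/-- The Poisson probability mass function. -/
noncomputable def poissonPMF (m : ℝ) (j : ℕ) : ℝ :=
  Real.exp (-m) * m ^ j / (Nat.factorial j)

/-- The mean cycle count `λ([ℓ]_k)` under the labeled Erdős–Rényi model. -/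
noncomputable def lamER [Fintype L] (a b : ℝ) (μ ν : L → ℝ) {k : ℕ} (ℓ : Fin k → L) : ℝ :=
  (1 / ((2 : ℝ) ^ (k + 1) * k)) * ∏ i, (a * μ (ℓ i) + b * ν (ℓ i))

/-- The mean cycle count `ξ([ℓ]_k)` under the labeled SBM. -/
noncomputable def xiSBM [Fintype L] (a b : ℝ) (μ ν : L → ℝ) {k : ℕ} (ℓ : Fin k → L) : ℝ :=
  (1 / ((2 : ℝ) ^ (k + 1) * k)) *
    (∏ i, (a * μ (ℓ i) + b * ν (ℓ i)) + ∏ i, (a * μ (ℓ i) - b * ν (ℓ i)))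

/-- The per-pair likelihood-ratio factor `W_{uv}(G, L, σ)` (SBM versus labeled
Erdős–Rényi), as a function of the pair status (`same` type or not) and the
edge/label information on the pair. -/
noncomputable def likPair (n : ℕ) (a b : ℝ) (μ ν : L → ℝ) (same : Bool) :
    Option L → ℝ
  | some ℓ =>
      if same then 2 * a * μ ℓ / (a * μ ℓ + b * ν ℓ)
      else 2 * b * ν ℓ / (a * μ ℓ + b * ν ℓ)
  | none =>
      if same then (1 - a / n) / (1 - (a + b) / (2 * n))
      else (1 - b / n) / (1 - (a + b) / (2 * n))

/-- The likelihood ratio `Y_n = ℙ_n / ℙ'_n` of the labeled SBM with respect to the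
labeled Erdős–Rényi model. -/
noncomputable def Ylik [Fintype L] (n : ℕ) (a b : ℝ) (μ ν : L → ℝ)
    (E : EdgeConf n L) : ℝ :=
  (1 / 2 : ℝ) ^ n * ∑ σ : Fin n → Bool,
    ∏ p : Pairs n, likPair n a b μ ν (σ p.1.1 == σ p.1.2) (E p)

/-!
The proof is by the method of factorial moments. A joint factorial moment of the cycle counts is the
expected number of families of distinct labeled cycles of prescribed lengths and labels. A family of
vertex-disjoint cycles is present with a probability that factors over its members, and averaging
over the types around one cycle is the trace of a product of symmetric `2 × 2` transfer matrices,
whose common eigenvectors `(1, 1)` and `(1, -1)` yield the two products in `xiSBM`. A family with an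
overlap spans more edges than vertices, so that all such families together contribute `O(1 / n)`.
Hence the factorial moments converge to those of independent Poisson variables, and the Bonferroni
inequalities turn this into convergence of the joint probability mass function.
-/

open scoped Topology

/-! ### Factorial moments and Poisson limits -/

section FactorialMoments

lemma abs_ite_eq_zero_sub_sum_choose_le (y J : ℕ) :
    |(if y = 0 then (1 : ℝ) else 0) - ∑ j ∈ range J, (-1 : ℝ) ^ j * y.choose j| ≤ y.choose J := by
  rcases y with _ | y
  · rcases J with _ | J <;> simp [sum_range_succ']
  rcases J with _ | J
  · simp
  have truncated : ∑ j ∈ range (J + 1), (-1 : ℝ) ^ j * (y + 1).choose j = (-1) ^ J * y.choose J :=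
    mod_cast Int.alternating_sum_range_choose_eq_choose (n := y) (m := J)
  rw [truncated, if_neg y.succ_ne_zero, zero_sub, abs_neg, abs_mul, abs_neg_one_pow, one_mul,
    Nat.abs_cast]
  exact_mod_cast (Nat.choose_succ_succ y J).symm ▸ Nat.le_add_right _ _

/-- The partial Bonferroni expansion of the probability of `{X = t}` when `s = -1` and `f r` is
the `r`-th factorial moment of `X`. Taking `s = 1` gives the same sum with absolute values. -/
noncomputable def bonferroniSum (s : ℝ) (t J : ℕ) (f : ℕ → ℝ) : ℝ :=
  ∑ j ∈ range J, s ^ j / (t.factorial * j.factorial) * f (t + j)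

lemma bonferroniSum_descFactorial (s : ℝ) (x t J : ℕ) :
    bonferroniSum s t J (fun r => x.descFactorial r) =
      x.choose t * ∑ j ∈ range J, s ^ j * (x - t).choose j := by
  rw [bonferroniSum, mul_sum]
  refine sum_congr rfl fun j _ => ?_
  have split : x.descFactorial (t + j) =
      t.factorial * x.choose t * (j.factorial * (x - t).choose j) := by
    rw [← Nat.descFactorial_mul_descFactorial (Nat.le_add_right t j), Nat.add_sub_cancel_left,
      Nat.descFactorial_eq_factorial_mul_choose, Nat.descFactorial_eq_factorial_mul_choose,
      mul_comm]
  have := t.factorial_ne_zero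
  have := j.factorial_ne_zero
  rw [split]
  push_cast
  field_simp

lemma abs_ite_eq_sub_bonferroniSum_le (x t J : ℕ) :
    |(if x = t then (1 : ℝ) else 0) - bonferroniSum (-1) t J (fun r => x.descFactorial r)| ≤
      bonferroniSum 1 t (J + 1) (fun r => x.descFactorial r) -
        bonferroniSum 1 t J (fun r => x.descFactorial r) := by
  have event : (if x = t then (1 : ℝ) else 0) = x.choose t * (if x - t = 0 then 1 else 0) := by
    rcases lt_trichotomy x t with h | rfl | h
    · simp [h.ne, Nat.choose_eq_zero_of_lt h]
    · simp
    · simp [h.ne', (Nat.sub_pos_of_lt h).ne']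
  simp only [bonferroniSum_descFactorial, sum_range_succ, one_pow, one_mul]
  rw [event, ← mul_sub, ← mul_sub, abs_mul, Nat.abs_cast, add_sub_cancel_left]
  exact mul_le_mul_of_nonneg_left (abs_ite_eq_zero_sub_sum_choose_le _ _) (Nat.cast_nonneg _)

lemma abs_bonferroniSum_neg_one_le (t J : ℕ) {f : ℕ → ℝ} (hf : ∀ r, 0 ≤ f r) :
    |bonferroniSum (-1) t J f| ≤ bonferroniSum 1 t J f := by
  refine (abs_sum_le_sum_abs _ _).trans_eq (sum_congr rfl fun j _ => ?_)
  rw [abs_mul, abs_div, abs_neg_one_pow, one_pow, abs_of_nonneg (hf _),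
    abs_of_nonneg (by positivity : (0 : ℝ) ≤ t.factorial * j.factorial)]

lemma tendsto_bonferroniSum_pow (s lam : ℝ) (t : ℕ) :
    Tendsto (fun J => bonferroniSum s t J (lam ^ ·)) atTop
      (𝓝 (exp (s * lam) * lam ^ t / t.factorial)) := by
  have exp_series := (NormedSpace.expSeries_div_hasSum_exp (s * lam)).tendsto_sum_nat.const_mul
    (lam ^ t / t.factorial)
  rw [← Real.exp_eq_exp_ℝ] at exp_series
  convert exp_series using 2 with J
  · rw [bonferroniSum, mul_sum]
    refine sum_congr rfl fun j _ => ?_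
    rw [mul_pow, pow_add]
    field_simp
  · ring

lemma abs_prod_sub_prod_le {ι : Type*} (s : Finset ι) {A B C D : ι → ℝ}
    (hB : ∀ i, |B i| ≤ C i) (hD : ∀ i, |A i - B i| ≤ D i) :
    |∏ i ∈ s, A i - ∏ i ∈ s, B i| ≤ ∏ i ∈ s, (C i + D i) - ∏ i ∈ s, C i := by
  classical
  have C_nonneg (i) : 0 ≤ C i := (abs_nonneg _).trans (hB i)
  have D_nonneg (i) : 0 ≤ D i := (abs_nonneg _).trans (hD i)
  induction s using Finset.induction_on with
  | empty => simp
  | insert i s hi ih =>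
    simp only [prod_insert hi]
    have hA : |A i| ≤ C i + D i := by
      linarith [hB i, hD i, abs_sub_abs_le_abs_sub (A i) (B i)]
    have hBs : |∏ j ∈ s, B j| ≤ ∏ j ∈ s, C j :=
      (abs_prod _ _).trans_le (prod_le_prod (fun _ _ => abs_nonneg _) fun j _ => hB j)
    calc |A i * ∏ j ∈ s, A j - B i * ∏ j ∈ s, B j|
        = |A i * (∏ j ∈ s, A j - ∏ j ∈ s, B j) + (A i - B i) * ∏ j ∈ s, B j| := by ring_nf
      _ ≤ |A i| * |∏ j ∈ s, A j - ∏ j ∈ s, B j| + |A i - B i| * |∏ j ∈ s, B j| := by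
          rw [← abs_mul, ← abs_mul]; exact abs_add_le _ _
      _ ≤ (C i + D i) * (∏ j ∈ s, (C j + D j) - ∏ j ∈ s, C j) + D i * ∏ j ∈ s, C j := by
          gcongr
          exacts [add_nonneg (C_nonneg i) (D_nonneg i), D_nonneg i, hD i]
      _ = (C i + D i) * ∏ j ∈ s, (C j + D j) - C i * ∏ j ∈ s, C j := by ring

lemma tendsto_of_eventually_abs_sub_le {α : Type*} {l : Filter α} {f : α → ℝ} {P R : ℕ → α → ℝ}
    {Q ρ : ℕ → ℝ} {c : ℝ} (hP : ∀ J, Tendsto (P J) l (𝓝 (Q J)))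
    (hR : ∀ J, Tendsto (R J) l (𝓝 (ρ J))) (hQ : Tendsto Q atTop (𝓝 c))
    (hρ : Tendsto ρ atTop (𝓝 0)) (hf : ∀ J, ∀ᶠ x in l, |f x - P J x| ≤ R J x) :
    Tendsto f l (𝓝 c) := by
  refine Metric.tendsto_nhds.2 fun ε hε => ?_
  obtain ⟨J, hQJ, hρJ⟩ := ((Metric.tendsto_nhds.1 hQ (ε / 3) (by positivity)).and
    (hρ.eventually_lt_const (show 0 < ε / 3 by positivity))).exists
  filter_upwards [hf J, (hR J).eventually_lt_const hρJ,
    Metric.tendsto_nhds.1 (hP J) (ε / 3) (by positivity)] with x hfx hRx hPx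
  calc dist (f x) c ≤ dist (f x) (P J x) + dist (P J x) (Q J) + dist (Q J) c := dist_triangle4 ..
    _ < ε := by linarith [Real.dist_eq (f x) (P J x)]

variable {α ι : Type*} [Fintype ι] {l : Filter α} {Ω : α → Type*} [∀ n, Fintype (Ω n)]
  {w : ∀ n, Ω n → ℝ} {X : ∀ n, ι → Ω n → ℕ} {lam : ι → ℝ}

lemma tendsto_sum_mul_prod_bonferroniSum
    (hmom : ∀ r : ι → ℕ, Tendsto
      (fun n => ∑ ω, w n ω * ∏ i, ((X n i ω).descFactorial (r i) : ℝ)) l (𝓝 (∏ i, lam i ^ r i)))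
    (s : ℝ) (t : ι → ℕ) (J : ℕ) :
    Tendsto (fun n => ∑ ω, w n ω * ∏ i, bonferroniSum s (t i) J fun r => (X n i ω).descFactorial r)
      l (𝓝 (∏ i, bonferroniSum s (t i) J (lam i ^ ·))) := by
  classical
  let coeff (p : ι → ℕ) : ℝ := ∏ i, s ^ p i / ((t i).factorial * (p i).factorial)
  have expand (f : ι → ℕ → ℝ) : ∏ i, bonferroniSum s (t i) J (f i) =
      ∑ p ∈ Fintype.piFinset fun _ : ι => range J, coeff p * ∏ i, f i (t i + p i) := by
    simp only [bonferroniSum, prod_univ_sum, coeff, ← prod_mul_distrib]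
  simp only [expand, mul_sum, mul_left_comm (w _ _)]
  refine (tendsto_finsetSum _ fun p _ => (hmom fun i => t i + p i).const_mul (coeff p)).congr
    fun n => ?_
  simp only [mul_sum]
  exact sum_comm

theorem tendsto_poissonPMF_of_tendsto_factorialMoment
    (hw : ∀ᶠ n in l, ∀ ω, 0 ≤ w n ω)
    (hmom : ∀ r : ι → ℕ, Tendsto
      (fun n => ∑ ω, w n ω * ∏ i, ((X n i ω).descFactorial (r i) : ℝ)) l (𝓝 (∏ i, lam i ^ r i)))
    (t : ι → ℕ) :
    Tendsto (fun n => ∑ ω, {ω | ∀ i, X n i ω = t i}.indicator (w n) ω) l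
      (𝓝 (∏ i, poissonPMF (lam i) (t i))) := by
  let B (s : ℝ) (J : ℕ) (n : α) : ℝ :=
    ∑ ω, w n ω * ∏ i, bonferroniSum s (t i) J fun r => (X n i ω).descFactorial r
  let b (s : ℝ) (J : ℕ) : ℝ := ∏ i, bonferroniSum s (t i) J (lam i ^ ·)
  have hB (s J) : Tendsto (B s J) l (𝓝 (b s J)) := tendsto_sum_mul_prod_bonferroniSum hmom s t J
  have hb (s) : Tendsto (b s) atTop
      (𝓝 (∏ i, exp (s * lam i) * lam i ^ t i / (t i).factorial)) :=
    tendsto_finsetProd _ fun i _ => tendsto_bonferroniSum_pow s (lam i) (t i)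
  refine tendsto_of_eventually_abs_sub_le (hB (-1)) (fun J => (hB 1 (J + 1)).sub (hB 1 J))
    (by simpa only [poissonPMF, neg_one_mul] using hb (-1))
    (by simpa using ((hb 1).comp (tendsto_add_atTop_nat 1)).sub (hb 1)) fun J => ?_
  filter_upwards [hw] with n hwn
  have event (ω) : {ω | ∀ i, X n i ω = t i}.indicator (w n) ω =
      w n ω * ∏ i, if X n i ω = t i then 1 else 0 := by
    simp [Set.indicator_apply, prod_boole]
  simp only [B, event, ← sum_sub_distrib, ← mul_sub]
  refine (abs_sum_le_sum_abs _ _).trans (sum_le_sum fun ω _ => ?_)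
  rw [abs_mul, abs_of_nonneg (hwn ω)]
  refine mul_le_mul_of_nonneg_left ?_ (hwn ω)
  refine (abs_prod_sub_prod_le _
    (fun i => abs_bonferroniSum_neg_one_le (t i) J fun r => Nat.cast_nonneg _)
    fun i => abs_ite_eq_sub_bonferroniSum_le (X n i ω) (t i) J).trans_eq ?_
  simp only [add_sub_cancel]

end FactorialMoments

/-! ### Finite product weights -/

section ProductWeights

variable {ι κ α : Type*} [Fintype ι] [Fintype κ] [Fintype α] [DecidableEq κ]
  {w : κ → α → ℝ} {e : ι → κ}

lemma sum_prod_mul_comp_injective [DecidableEq ι] (hw : ∀ k, ∑ x, w k x = 1) (he : e.Injective)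
    (F : (ι → α) → ℝ) :
    ∑ E : κ → α, (∏ k, w k (E k)) * F (fun i => E (e i)) =
      ∑ y : ι → α, (∏ i, w (e i) (y i)) * F y := by
  classical
  let split : ι ⊕ ↥(Set.range e)ᶜ ≃ κ :=
    ((Equiv.ofInjective e he).sumCongr (Equiv.refl _)).trans (Equiv.Set.sumCompl (Set.range e))
  have split_inl (i) : split (Sum.inl i) = e i := rfl
  have unit_mass : ∑ z : ↥(Set.range e)ᶜ → α, ∏ k, w (split (Sum.inr k)) (z k) = 1 := by
    rw [← Fintype.prod_sum]
    simp [hw]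
  rw [← (split.arrowCongr (Equiv.refl α)).sum_comp,
    ← (Equiv.sumArrowEquivProdArrow _ _ α).symm.sum_comp, Fintype.sum_prod_type]
  refine sum_congr rfl fun y _ => ?_
  simp only [← split.prod_comp, Fintype.prod_sum_type, ← split_inl, Equiv.arrowCongr_apply,
    Equiv.coe_refl, Function.comp_apply, Equiv.symm_apply_apply, id, Equiv.sumArrowEquivProdArrow,
    Equiv.coe_fn_symm_mk, Sum.elim_inl, Sum.elim_inr]
  rw [← sum_mul, ← mul_sum, unit_mass, mul_one]

lemma sum_indicator_prod_cylinder (hw : ∀ k, ∑ x, w k x = 1) (he : e.Injective)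
    (t : ι → Set α) :
    ∑ E : κ → α, {E : κ → α | ∀ i, E (e i) ∈ t i}.indicator (fun E => ∏ k, w k (E k)) E =
      ∏ i, ∑ x, (t i).indicator (w (e i)) x := by
  classical
  calc _ = ∑ E : κ → α, (∏ k, w k (E k)) * if ∀ i, E (e i) ∈ t i then 1 else 0 := by
        simp [Set.indicator_apply]
    _ = ∑ y : ι → α, (∏ i, w (e i) (y i)) * if ∀ i, y i ∈ t i then 1 else 0 :=
        sum_prod_mul_comp_injective hw he fun y => if ∀ i, y i ∈ t i then 1 else 0
    _ = ∑ y : ι → α, ∏ i, (t i).indicator (w (e i)) (y i) := by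
        simp [Set.indicator_apply, Finset.prod_ite_zero]
    _ = ∏ i, ∑ x, (t i).indicator (w (e i)) x := (Fintype.prod_sum _).symm

end ProductWeights

/-! ### The trace formula for two types -/

section TraceFormula

/-- For `ε = 1` and `ε = -1` these are the two characters of the types: the eigenvectors of every
transfer matrix with diagonal `p` and off-diagonal `q`, with eigenvalue `p + ε * q`. -/
def typeChar (ε : ℝ) (s : Bool) : ℝ := if s then 1 else ε

lemma sum_path_typeChar {ε : ℝ} (hε : ε * ε = 1) {k : ℕ} (p q : Fin k → ℝ) :
    ∑ τ : Fin (k + 1) → Bool, typeChar ε (τ 0) * typeChar ε (τ (Fin.last k)) *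
        ∏ i : Fin k, (if τ i.castSucc == τ i.succ then p i else q i) =
      2 * ∏ i, (p i + ε * q i) := by
  induction k with
  | zero =>
    have (s : Bool) : typeChar ε s * typeChar ε s = 1 := by cases s <;> simp [typeChar, hε]
    simp [show Fin.last 0 = 0 from rfl, this]
  | succ k ih =>
    have first_step (s : Bool) : ∑ r : Bool, typeChar ε r * (if r == s then p 0 else q 0) =
        (p 0 + ε * q 0) * typeChar ε s := by
      cases s
      · simp only [Fintype.sum_bool, typeChar, beq_false, Bool.not_true, Bool.not_false,
          Bool.false_eq_true, if_true, if_false]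
        linear_combination (-q 0) * hε
      · simp [typeChar]
    rw [← (Fin.consEquiv (fun _ : Fin (k + 2) => Bool)).sum_comp, Fintype.sum_prod_type_right,
      Fin.prod_univ_succ, mul_left_comm, ← ih, mul_sum]
    refine sum_congr rfl fun τ _ => ?_
    simp only [Fin.consEquiv_apply, Fin.prod_univ_succ, Fin.castSucc_zero, Fin.cons_zero,
      Fin.cons_succ, ← Fin.succ_castSucc, ← Fin.succ_last]
    rw [← mul_assoc, ← mul_assoc, ← first_step, sum_mul, sum_mul]
    exact sum_congr rfl fun r _ => by ring

theorem sum_cycle_types {k : ℕ} [NeZero k] (p q : Fin k → ℝ) :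
    ∑ τ : Fin k → Bool, ∏ i, (if τ i == τ (i + 1) then p i else q i) =
      ∏ i, (p i + q i) + ∏ i, (p i - q i) := by
  obtain ⟨k, rfl⟩ := Nat.exists_eq_succ_of_ne_zero (NeZero.ne k)
  let P (τ : Fin (k + 1) → Bool) : ℝ :=
    ∏ i : Fin k, if τ i.castSucc == τ i.succ then p i.castSucc else q i.castSucc
  have closing_step (s t : Bool) (x y : ℝ) : (if t == s then x else y) =
      (x + y) / 2 * (typeChar 1 s * typeChar 1 t) +
        (x - y) / 2 * (typeChar (-1) s * typeChar (-1) t) := by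
    cases s <;> cases t <;> simp [typeChar] <;> ring
  have diagonalize (τ : Fin (k + 1) → Bool) :
      ∏ i, (if τ i == τ (i + 1) then p i else q i) =
        (p (Fin.last k) + q (Fin.last k)) / 2 *
            (typeChar 1 (τ 0) * typeChar 1 (τ (Fin.last k)) * P τ) +
          (p (Fin.last k) - q (Fin.last k)) / 2 *
            (typeChar (-1) (τ 0) * typeChar (-1) (τ (Fin.last k)) * P τ) := by
    simp only [Fin.prod_univ_castSucc, Fin.coeSucc_eq_succ, Fin.last_add_one]
    rw [closing_step]
    ring
  simp only [diagonalize, sum_add_distrib, ← mul_sum, P]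
  rw [sum_path_typeChar (one_mul 1) (fun i => p i.castSucc) (fun i => q i.castSucc),
    sum_path_typeChar (by norm_num) (fun i => p i.castSucc) (fun i => q i.castSucc),
    Fin.prod_univ_castSucc, Fin.prod_univ_castSucc (fun i => p i - q i)]
  simp only [one_mul, neg_one_mul, ← sub_eq_add_neg]
  ring

end TraceFormula

/-! ### Canonical cycles -/

lemma card_filter_injective_forall_mem (ι : Type*) {V : Type*} [Fintype ι] [DecidableEq ι]
    [Fintype V] [DecidableEq V] (s : Finset V) :
    #{g : ι → V | g.Injective ∧ ∀ i, g i ∈ s} = (#s).descFactorial (Fintype.card ι) := by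
  rw [← Fintype.card_coe s, ← Fintype.card_embedding_eq, ← Fintype.card_subtype]
  exact Fintype.card_congr
    { toFun g := ⟨fun i => ⟨g.1 i, g.2.2 i⟩, fun _ _ h => g.2.1 (congrArg Subtype.val h)⟩
      invFun f := ⟨fun i => f i, fun _ _ h => f.injective (Subtype.ext h), fun i => (f i).2⟩ }

lemma card_filter_injective (ι V : Type*) [Fintype ι] [DecidableEq ι] [Fintype V]
    [DecidableEq V] :
    #{g : ι → V | g.Injective} = (Fintype.card V).descFactorial (Fintype.card ι) := by
  simpa using card_filter_injective_forall_mem ι (univ : Finset V)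

section CanonicalCycles

variable {V : Type*} [LinearOrder V] {k : ℕ} [NeZero k]

/-- A vertex sequence traversing a cycle once, starting from its smallest vertex. -/
structure IsRootedCycle (c : Fin k → V) : Prop where
  injective : c.Injective
  root_le : ∀ i, c 0 ≤ c i

/-- The representative of a cycle singled out in the definition of `cycleCount`: it starts from
the smallest vertex and proceeds towards the smaller of the two neighbours of that vertex.
Indices are cyclic, so that `c (-1)` is the last vertex. -/
structure IsCanonicalCycle (c : Fin k → V) : Prop extends IsRootedCycle c where
  lt_last : c 1 < c (-1)

instance : DecidablePred (IsRootedCycle : (Fin k → V) → Prop) := fun c =>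
  decidable_of_iff (c.Injective ∧ ∀ i, c 0 ≤ c i) ⟨fun h => ⟨h.1, h.2⟩, fun h => ⟨h.1, h.2⟩⟩

instance : DecidablePred (IsCanonicalCycle : (Fin k → V) → Prop) := fun c =>
  decidable_of_iff (IsRootedCycle c ∧ c 1 < c (-1)) ⟨fun h => ⟨h.1, h.2⟩, fun h => ⟨h.1, h.2⟩⟩

lemma IsRootedCycle.comp_neg {c : Fin k → V} (hc : IsRootedCycle c) :
    IsRootedCycle fun i => c (-i) where
  injective := hc.injective.comp neg_injective
  root_le i := by simpa using hc.root_le (-i)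

lemma IsCanonicalCycle.add_one_ne_sub_one {c : Fin k → V} (hc : IsCanonicalCycle c) (i : Fin k) :
    i + 1 ≠ i - 1 := fun h =>
  hc.lt_last.ne (congrArg c (add_left_cancel (h.trans (sub_eq_add_neg i 1))))

lemma IsCanonicalCycle.add_one_ne {c : Fin k → V} (hc : IsCanonicalCycle c) (i : Fin k) :
    i + 1 ≠ i := fun h => hc.add_one_ne_sub_one i (by rw [h, eq_sub_iff_add_eq, h])

lemma IsCanonicalCycle.card_neighbors {c : Fin k → V} (hc : IsCanonicalCycle c) (i : Fin k) :
    #{c (i + 1), c (i - 1)} = 2 :=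
  card_pair fun h => hc.add_one_ne_sub_one i (hc.injective h)

section Counting

variable [Fintype V]

variable (V k) in
lemma card_isRootedCycle_mul :
    #{c : Fin k → V | IsRootedCycle c} * k = (Fintype.card V).descFactorial k := by
  let minAt (j : Fin k) : Finset (Fin k → V) := {c | c.Injective ∧ ∀ i, c j ≤ c i}
  have card_minAt (j) : #(minAt j) = #{c : Fin k → V | IsRootedCycle c} := by
    refine card_equiv ((Equiv.subRight j).arrowCongr (Equiv.refl _)) fun c => ?_
    simp only [minAt, mem_filter_univ]
    refine ⟨fun h => ⟨h.1.comp (Equiv.injective _), fun i => ?_⟩, fun h => ⟨?_, fun i => ?_⟩⟩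
    · simpa using h.2 _
    · exact (Equiv.injective_comp (Equiv.subRight j).symm c).1 h.1
    · simpa using h.2 (i - j)
  have partition : ({c : Fin k → V | c.Injective} : Finset _) = univ.biUnion minAt := by
    ext c
    simp only [minAt, mem_filter_univ, mem_biUnion, mem_univ, true_and, exists_and_left]
    exact (and_iff_left (Finite.exists_min c)).symm
  conv_rhs => rw [← Fintype.card_fin k, ← card_filter_injective, partition]
  rw [card_biUnion]
  · simp [card_minAt, mul_comm]
  · refine fun i _ j _ hij => disjoint_left.2 fun c hi hj => hij ?_
    simp only [minAt, mem_filter_univ] at hi hj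
    exact hi.1 (le_antisymm (hi.2 j) (hj.2 i))

variable (V) in
lemma card_isRootedCycle (hk : 3 ≤ k) :
    #{c : Fin k → V | IsRootedCycle c} = 2 * #{c : Fin k → V | IsCanonicalCycle c} := by
  have one_ne_neg_one : (1 : Fin k) ≠ -1 := by
    obtain ⟨k, rfl⟩ := Nat.exists_eq_add_of_le' hk
    intro h
    simpa using congrArg Fin.val h
  rw [← card_filter_add_card_filter_not (p := fun c : Fin k → V => c 1 < c (-1)), two_mul]
  congr 1
  · rw [filter_filter]
    exact congrArg card (filter_congr fun c _ => ⟨fun h => ⟨h.1, h.2⟩, fun h => ⟨h.1, h.2⟩⟩)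
  · refine card_equiv ((Equiv.neg (Fin k)).arrowCongr (Equiv.refl _)) fun c => ?_
    simp only [mem_filter, mem_univ, true_and, not_lt]
    refine ⟨fun h => ⟨h.1.comp_neg, ?_⟩, fun h => ⟨?_, ?_⟩⟩
    · simpa using h.2.lt_of_ne fun h' => one_ne_neg_one (h.1.injective h'.symm)
    · simpa using h.1.comp_neg
    · simpa using h.2.le

variable (V) in
theorem card_isCanonicalCycle_mul (hk : 3 ≤ k) :
    #{c : Fin k → V | IsCanonicalCycle c} * (2 * k) = (Fintype.card V).descFactorial k := by
  rw [← card_isRootedCycle_mul, card_isRootedCycle V hk]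
  ring

end Counting

@[elab_as_elim]
lemma fin_induction_add_one {P : Fin k → Prop} (zero : P 0) (add_one : ∀ i, P i → P (i + 1))
    (i : Fin k) : P i := by
  obtain ⟨k, rfl⟩ := Nat.exists_eq_succ_of_ne_zero (NeZero.ne k)
  exact Fin.induction zero (fun i hi => Fin.coeSucc_eq_succ ▸ add_one _ hi) i

omit [LinearOrder V] in
lemma range_subset_range_of_neighbors_subset {l : ℕ} [NeZero l] {c : Fin k → V} {d : Fin l → V}
    (hcd : ∀ i j, c i = d j → c (i + 1) ∈ Set.range d) {i₀ : Fin k} (h₀ : c i₀ ∈ Set.range d) :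
    Set.range c ⊆ Set.range d := by
  have along (i) : c (i₀ + i) ∈ Set.range d := by
    induction i using fin_induction_add_one with
    | zero => simpa using h₀
    | add_one i hi =>
      obtain ⟨j, hj⟩ := hi
      simpa only [add_assoc] using hcd _ j hj.symm
  rintro _ ⟨i, rfl⟩
  simpa using along (i - i₀)

lemma IsCanonicalCycle.eq_of_neighbors_eq {c d : Fin k → V} (hc : IsCanonicalCycle c)
    (hd : IsCanonicalCycle d) (hrange : Set.range c = Set.range d)
    (hcd : ∀ i j, c i = d j → ({c (i + 1), c (i - 1)} : Set V) = {d (j + 1), d (j - 1)}) :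
    c = d := by
  have root_eq : c 0 = d 0 := by
    obtain ⟨i, hi⟩ : d 0 ∈ Set.range c := hrange ▸ Set.mem_range_self 0
    obtain ⟨j, hj⟩ : c 0 ∈ Set.range d := hrange ▸ Set.mem_range_self 0
    exact le_antisymm (hi ▸ hc.root_le i) (hj ▸ hd.root_le j)
  have second_eq : c 1 = d 1 := by
    have h := hcd 0 0 root_eq
    simp only [zero_add, zero_sub, Set.pair_eq_pair_iff] at h
    obtain ⟨h, -⟩ | ⟨h, h'⟩ := h
    · exact h
    · exact absurd (h ▸ h' ▸ hc.lt_last) hd.lt_last.asymm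
  have along (i : Fin k) : c i = d i ∧ c (i + 1) = d (i + 1) := by
    induction i using fin_induction_add_one with
    | zero => exact ⟨root_eq, by simpa using second_eq⟩
    | add_one i hi =>
      refine ⟨hi.2, ?_⟩
      have h := hcd _ _ hi.2
      simp only [add_sub_cancel_right, Set.pair_eq_pair_iff] at h
      obtain ⟨h, -⟩ | ⟨h, -⟩ := h
      · exact h
      · refine absurd (hc.injective (h.trans hi.1.symm)) ?_
        simpa using hc.add_one_ne_sub_one (i + 1)
  exact funext fun i => (along i).1

theorem IsCanonicalCycle.sigma_eq_of_neighbors_eq {l : ℕ} [NeZero l] {c : Fin k → V}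
    {d : Fin l → V} (hc : IsCanonicalCycle c) (hd : IsCanonicalCycle d)
    (hcd : ∀ i j, c i = d j → ({c (i + 1), c (i - 1)} : Set V) = {d (j + 1), d (j - 1)})
    (hmeet : ∃ i j, c i = d j) : (⟨k, c⟩ : Σ k, Fin k → V) = ⟨l, d⟩ := by
  obtain ⟨i₀, j₀, h₀⟩ := hmeet
  have hrange : Set.range c = Set.range d := by
    refine (range_subset_range_of_neighbors_subset (fun i j h => ?_) ⟨j₀, h₀.symm⟩).antisymm
      (range_subset_range_of_neighbors_subset (fun j i h => ?_) ⟨i₀, h₀⟩)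
    · have : c (i + 1) ∈ ({d (j + 1), d (j - 1)} : Set V) := hcd i j h ▸ Set.mem_insert _ _
      rcases this with h | h <;> exact ⟨_, h.symm⟩
    · have : d (j + 1) ∈ ({c (i + 1), c (i - 1)} : Set V) := hcd i j h.symm ▸ Set.mem_insert _ _
      rcases this with h | h <;> exact ⟨_, h.symm⟩
  obtain rfl : k = l := by
    simpa [Set.ncard_range_of_injective, hc.injective, hd.injective] using
      congrArg Set.ncard hrange
  rw [hc.eq_of_neighbors_eq hd hrange hcd]

end CanonicalCycles

/-! ### Unions of cycles -/

section CycleUnions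

lemma degree_eq_two_of_card_edgeFinset_le {V : Type*} [Fintype V] (H : SimpleGraph V)
    [DecidableRel H.Adj] {A : Finset V} (hdeg : ∀ v ∈ A, 2 ≤ H.degree v)
    (hcard : #H.edgeFinset ≤ #A) {v : V} (hv : v ∈ A) : H.degree v = 2 := by
  have handshake : ∑ v ∈ A, H.degree v ≤ ∑ v ∈ A, 2 := calc
    ∑ v ∈ A, H.degree v ≤ ∑ v, H.degree v := sum_le_sum_of_subset (subset_univ A)
    _ = 2 * #H.edgeFinset := H.sum_degrees_eq_twice_card_edges
    _ ≤ ∑ v ∈ A, 2 := by rw [sum_const, smul_eq_mul]; omega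
  exact ((sum_eq_sum_iff_of_le hdeg).1 ((sum_le_sum hdeg).antisymm handshake) v hv).symm

variable {V J : Type*} {k : J → ℕ} [∀ x, NeZero (k x)]

/-- The vertex at each position of a family of cyclic vertex sequences. -/
def vertexMap (g : ∀ x, Fin (k x) → V) (q : Σ x, Fin (k x)) : V := g q.1 q.2

/-- The graph formed by the edges of all members of a family of cyclic vertex sequences. -/
def cycleUnion (g : ∀ x, Fin (k x) → V) : SimpleGraph V :=
  .fromRel fun u v => ∃ x i, g x i = u ∧ g x (i + 1) = v

variable [LinearOrder V] {g : ∀ x, Fin (k x) → V}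

/-- The cyclic vertex sequences `g x` are canonical traversals of pairwise distinct cycles.
Lengths may vary with `x`, hence the comparison in a sigma type. -/
structure IsCycleFamily (g : ∀ x, Fin (k x) → V) : Prop where
  isCanonicalCycle : ∀ x, IsCanonicalCycle (g x)
  distinct : (fun x => (⟨k x, g x⟩ : Σ k, Fin k → V)).Injective

instance [Fintype J] [DecidableEq J] (g : ∀ x, Fin (k x) → V) : Decidable (IsCycleFamily g) :=
  decidable_of_iff (_ ∧ _) ⟨fun h => ⟨h.1, h.2⟩, fun h => ⟨h.1, h.2⟩⟩

lemma isCycleFamily_of_injective_vertexMap (hg : ∀ x, IsCanonicalCycle (g x))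
    (hinj : (vertexMap g).Injective) : IsCycleFamily g := by
  refine ⟨hg, fun x y h => ?_⟩
  have root_eq {p q : Σ k, Fin k → V} [NeZero p.1] [NeZero q.1] (hpq : p = q) :
      p.2 0 = q.2 0 := by
    subst hpq
    rfl
  exact congrArg Sigma.fst (@hinj ⟨x, 0⟩ ⟨y, 0⟩ (root_eq h))

lemma cycleUnion_adj_add_one {x : J} (hg : IsCanonicalCycle (g x)) (i : Fin (k x)) :
    (cycleUnion g).Adj (g x i) (g x (i + 1)) :=
  (SimpleGraph.fromRel_adj _ _ _).2
    ⟨fun h => hg.add_one_ne i (hg.injective h.symm), .inl ⟨x, i, rfl, rfl⟩⟩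

variable [Fintype V] [DecidableRel (cycleUnion g).Adj]

lemma pair_subset_neighborFinset_cycleUnion {x : J} (hg : IsCanonicalCycle (g x))
    (i : Fin (k x)) : {g x (i + 1), g x (i - 1)} ⊆ (cycleUnion g).neighborFinset (g x i) := by
  simp only [insert_subset_iff, singleton_subset_iff, SimpleGraph.mem_neighborFinset]
  refine ⟨cycleUnion_adj_add_one hg i, (SimpleGraph.adj_comm _ _ _).1 ?_⟩
  simpa using cycleUnion_adj_add_one hg (i - 1)

/-- With as few edges as vertices every vertex has degree two, so that two members of the family
which meet must run along the same cycle. -/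
theorem injective_vertexMap_of_card_edgeFinset_le [Fintype J]
    (hg : IsCycleFamily g) (hcard : #(cycleUnion g).edgeFinset ≤ #(univ.image (vertexMap g))) :
    (vertexMap g).Injective := by
  obtain ⟨hg, hdistinct⟩ := hg
  have two_le_degree : ∀ v ∈ univ.image (vertexMap g), 2 ≤ (cycleUnion g).degree v := by
    simp only [mem_image, mem_univ, true_and, forall_exists_index, forall_apply_eq_imp_iff]
    rintro ⟨x, i⟩
    exact ((hg x).card_neighbors i).symm.le.trans
      (card_le_card (pair_subset_neighborFinset_cycleUnion (hg x) i))
  have neighbors (x) (i : Fin (k x)) :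
      ({g x (i + 1), g x (i - 1)} : Set V) = (cycleUnion g).neighborSet (g x i) := by
    rw [← coe_pair, ← SimpleGraph.coe_neighborFinset, coe_inj]
    refine eq_of_subset_of_card_le (pair_subset_neighborFinset_cycleUnion (hg x) i) ?_
    rw [(hg x).card_neighbors, SimpleGraph.card_neighborFinset_eq_degree]
    exact (degree_eq_two_of_card_edgeFinset_le _ two_le_degree hcard
      (mem_image_of_mem (vertexMap g) (mem_univ ⟨x, i⟩))).le
  rintro ⟨x, i⟩ ⟨y, j⟩ (hmeet : g x i = g y j)
  obtain rfl : x = y := hdistinct <| (hg x).sigma_eq_of_neighbors_eq (hg y)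
    (fun i j h => (neighbors x i).trans (h ▸ (neighbors y j).symm)) ⟨i, j, hmeet⟩
  rw [(hg x).injective hmeet]

end CycleUnions

/-! ### Cycle probabilities in the block model -/

section BlockModel

/-- The cyclic vertex sequence `c` is a closed walk in the graph of `E`, with labels `ℓ` along
its edges. -/
def HasLabels {n k : ℕ} [NeZero k] (E : EdgeConf n L) (c : Fin k → Fin n) (ℓ : Fin k → L) :
    Prop :=
  ∀ i, getLabel E (c i) (c (i + 1)) = some (ℓ i)

instance [DecidableEq L] {n k : ℕ} [NeZero k] (E : EdgeConf n L) (c : Fin k → Fin n)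
    (ℓ : Fin k → L) : Decidable (HasLabels E c ℓ) :=
  inferInstanceAs (Decidable (∀ _, _ = _))

lemma cycleCount_eq_card [DecidableEq L] {n k : ℕ} [NeZero k] (E : EdgeConf n L)
    (ℓ : Fin k → L) : cycleCount n k E ℓ = #{c | IsCanonicalCycle c ∧ HasLabels E c ℓ} := by
  have last_eq : (⟨k - 1, Nat.sub_lt (NeZero.pos k) one_pos⟩ : Fin k) = -1 := by
    obtain ⟨k, rfl⟩ := Nat.exists_eq_succ_of_ne_zero (NeZero.ne k)
    exact (eq_neg_of_add_eq_zero_left (Fin.last_add_one k))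
  rw [cycleCount, dif_pos (NeZero.pos k)]
  refine congrArg card (filter_congr fun c _ => ?_)
  rw [last_eq]
  exact ⟨fun h => ⟨⟨⟨h.1, h.2.1⟩, h.2.2.1⟩, h.2.2.2⟩, fun h =>
    ⟨h.1.injective, h.1.root_le, h.1.lt_last, h.2⟩⟩

/-- The increasing pair of the endpoints of an edge. -/
def edgePair {n : ℕ} (e : {e : Sym2 (Fin n) // ¬ e.IsDiag}) : Pairs n :=
  ⟨(e.1.inf, e.1.sup), by
    obtain ⟨⟨u, v⟩, huv⟩ := e
    exact min_lt_max.2 huv⟩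

lemma edgePair_injective {n : ℕ} : (edgePair (n := n)).Injective := fun e e' h => by
  have h := Prod.ext_iff.1 (congrArg Subtype.val h)
  exact Subtype.ext (Sym2.sortEquiv.injective (Subtype.ext (Prod.ext h.1 h.2)))

lemma getLabel_eq_edgePair {n : ℕ} (E : EdgeConf n L) {u v : Fin n} (h : u ≠ v) :
    getLabel E u v = E (edgePair ⟨s(u, v), h⟩) := by
  rcases h.lt_or_gt with h | h
  · simp [getLabel, edgePair, h, min_eq_left h.le, max_eq_right h.le]
  · simp [getLabel, edgePair, h, h.not_gt, min_eq_right h.le, max_eq_left h.le]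

lemma beq_edgePair {n : ℕ} (σ : Fin n → Bool) {u v : Fin n} (h : u ≠ v) :
    (σ (edgePair ⟨s(u, v), h⟩).1.1 == σ (edgePair ⟨s(u, v), h⟩).1.2) = (σ u == σ v) := by
  rcases h.lt_or_gt with h | h
  · simp [edgePair, min_eq_left h.le, max_eq_right h.le]
  · simp [edgePair, min_eq_right h.le, max_eq_left h.le, Bool.beq_comm]

lemma getLabel_isSome_of_hasLabels {J : Type*} {n : ℕ} {k : J → ℕ} [∀ x, NeZero (k x)]
    {g : ∀ x, Fin (k x) → Fin n} {E : EdgeConf n L} {lab : ∀ x, Fin (k x) → L}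
    (hE : ∀ x, HasLabels E (g x) (lab x)) {u v : Fin n} (huv : (cycleUnion g).Adj u v) :
    (getLabel E u v).isSome := by
  have symm (u v : Fin n) : getLabel E u v = getLabel E v u := by
    by_cases h : u = v
    · rw [h]
    · simp only [getLabel_eq_edgePair E h, getLabel_eq_edgePair E (Ne.symm h), Sym2.eq_swap]
  obtain ⟨-, ⟨x, i, rfl, rfl⟩ | ⟨x, i, rfl, rfl⟩⟩ := (SimpleGraph.fromRel_adj _ _ _).1 huv
  · simp [hE x i]
  · simp [symm _ (g x i), hE x i]

variable [Fintype L] {n : ℕ} {a b : ℝ} {μ ν : L → ℝ}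

lemma sum_sbmPairMass (hμ : IsProbVec μ) (hν : IsProbVec ν) (same : Bool) :
    ∑ o, sbmPairMass n a b μ ν same o = 1 := by
  cases same <;> simp [Fintype.sum_option, sbmPairMass, ← mul_sum, hμ.2, hν.2]

lemma sbmPairMass_nonneg (ha : 0 ≤ a) (hb : 0 ≤ b) (hμ : IsProbVec μ) (hν : IsProbVec ν)
    (han : a ≤ n) (hbn : b ≤ n) (same : Bool) (o : Option L) :
    0 ≤ sbmPairMass n a b μ ν same o := by
  have := div_le_one_of_le₀ han n.cast_nonneg
  have := div_le_one_of_le₀ hbn n.cast_nonneg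
  have μ_nonneg (ℓ : L) : 0 ≤ a / n * μ ℓ := mul_nonneg (by positivity) (hμ.1 ℓ)
  have ν_nonneg (ℓ : L) : 0 ≤ b / n * ν ℓ := mul_nonneg (by positivity) (hν.1 ℓ)
  cases same <;> cases o <;> simp [sbmPairMass, *]

lemma sbmMass_nonneg (ha : 0 ≤ a) (hb : 0 ≤ b) (hμ : IsProbVec μ) (hν : IsProbVec ν)
    (han : a ≤ n) (hbn : b ≤ n) (x : (Fin n → Bool) × EdgeConf n L) :
    0 ≤ sbmMass n a b μ ν x :=
  mul_nonneg (by positivity) (prod_nonneg fun _ _ => sbmPairMass_nonneg ha hb hμ hν han hbn _ _)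

lemma eventually_sbmMass_nonneg (ha : 0 ≤ a) (hb : 0 ≤ b) (hμ : IsProbVec μ)
    (hν : IsProbVec ν) : ∀ᶠ n : ℕ in atTop, ∀ x, 0 ≤ sbmMass n a b μ ν x := by
  filter_upwards [tendsto_natCast_atTop_atTop.eventually_ge_atTop a,
    tendsto_natCast_atTop_atTop.eventually_ge_atTop b] with n han hbn
  exact sbmMass_nonneg ha hb hμ hν han hbn

lemma sbmGraphProb_nonneg (ha : 0 ≤ a) (hb : 0 ≤ b) (hμ : IsProbVec μ) (hν : IsProbVec ν)
    (han : a ≤ n) (hbn : b ≤ n) (A : Set (EdgeConf n L)) : 0 ≤ sbmGraphProb n a b μ ν A :=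
  sum_nonneg fun _ _ => Set.indicator_nonneg
    (fun x _ => sbmMass_nonneg ha hb hμ hν han hbn x) _

lemma sbmGraphProb_mono (ha : 0 ≤ a) (hb : 0 ≤ b) (hμ : IsProbVec μ) (hν : IsProbVec ν)
    (han : a ≤ n) (hbn : b ≤ n) {A B : Set (EdgeConf n L)} (hAB : A ⊆ B) :
    sbmGraphProb n a b μ ν A ≤ sbmGraphProb n a b μ ν B :=
  sum_le_sum fun x _ => Set.indicator_le_indicator_apply_of_subset (fun _ h => hAB h)
    (sbmMass_nonneg ha hb hμ hν han hbn x)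

lemma sbmGraphProb_eq_sum_sbmCondProb (A : Set (EdgeConf n L)) :
    sbmGraphProb n a b μ ν A = (1 / 2) ^ n * ∑ σ, sbmCondProb n a b μ ν σ A := by
  simp only [sbmGraphProb, sbmProb, sbmCondProb, Fintype.sum_prod_type, mul_sum]
  refine sum_congr rfl fun σ _ => sum_congr rfl fun E _ => ?_
  by_cases hE : E ∈ A <;> simp [sbmMass, hE]

lemma sum_sbmMass_mul_card {β : Type*} (s : Finset β) (P : β → EdgeConf n L → Prop)
    [∀ E, DecidablePred (P · E)] :
    ∑ x, sbmMass n a b μ ν x * #{g ∈ s | P g x.2} =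
      ∑ g ∈ s, sbmGraphProb n a b μ ν {E | P g E} := by
  simp only [sbmGraphProb, sbmProb, Finset.sum_comm (s := s), card_filter, Nat.cast_sum, mul_sum]
  refine sum_congr rfl fun x _ => sum_congr rfl fun g _ => ?_
  simp [Set.indicator_apply]

lemma sbmCondProb_cylinder (hμ : IsProbVec μ) (hν : IsProbVec ν) (σ : Fin n → Bool)
    {ι : Type*} [Fintype ι] {e : ι → Pairs n} (he : e.Injective) (t : ι → Set (Option L)) :
    sbmCondProb n a b μ ν σ {E | ∀ i, E (e i) ∈ t i} =
      ∏ i, ∑ o, (t i).indicator (sbmPairMass n a b μ ν (σ (e i).1.1 == σ (e i).1.2)) o :=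
  sum_indicator_prod_cylinder
    (w := fun p : Pairs n => sbmPairMass n a b μ ν (σ p.1.1 == σ p.1.2))
    (fun _ => sum_sbmPairMass hμ hν _) he t

theorem sbmGraphProb_subgraph_le (ha : 0 ≤ a) (hb : 0 ≤ b) (hμ : IsProbVec μ)
    (hν : IsProbVec ν) (han : a ≤ n) (hbn : b ≤ n) (H : SimpleGraph (Fin n))
    [DecidableRel H.Adj] :
    sbmGraphProb n a b μ ν {E | ∀ u v, H.Adj u v → (getLabel E u v).isSome} ≤
      ((a + b) / n) ^ #H.edgeFinset := by
  let e (x : H.edgeFinset) : Pairs n :=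
    edgePair ⟨x, H.not_isDiag_of_mem_edgeFinset x.2⟩
  have he : e.Injective := fun x y h => Subtype.ext (congrArg (·.1) (edgePair_injective h))
  have edge_mass (same : Bool) :
      ∑ o, {o : Option L | o.isSome}.indicator (sbmPairMass n a b μ ν same) o ≤ (a + b) / n := by
    have : 0 ≤ a / n := by positivity
    have : 0 ≤ b / n := by positivity
    cases same <;>
      simp [Fintype.sum_option, sbmPairMass, Set.indicator_apply, ← mul_sum, hμ.2, hν.2,
        add_div, *]
  have cond (σ : Fin n → Bool) :
      sbmCondProb n a b μ ν σ {E | ∀ x, E (e x) ∈ {o | o.isSome}} ≤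
        ((a + b) / n) ^ #H.edgeFinset := by
    rw [sbmCondProb_cylinder hμ hν σ he]
    refine (prod_le_prod (fun x _ => sum_nonneg fun o _ => Set.indicator_nonneg (fun o _ => ?_) o)
      fun x _ => edge_mass _).trans_eq (by simp [div_pow])
    exact sbmPairMass_nonneg ha hb hμ hν han hbn _ o
  calc _ ≤ sbmGraphProb n a b μ ν {E | ∀ x, E (e x) ∈ {o | o.isSome}} := by
        refine sbmGraphProb_mono ha hb hμ hν han hbn fun E hE ⟨x, hx⟩ => ?_
        induction x with
        | h u v =>
          have huv : H.Adj u v := SimpleGraph.mem_edgeFinset.1 hx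
          exact getLabel_eq_edgePair E huv.ne ▸ hE u v huv
    _ = (1 / 2) ^ n * ∑ σ, sbmCondProb n a b μ ν σ {E | ∀ x, E (e x) ∈ {o | o.isSome}} :=
        sbmGraphProb_eq_sum_sbmCondProb _
    _ ≤ (1 / 2) ^ n * ∑ _σ : Fin n → Bool, ((a + b) / n) ^ #H.edgeFinset := by
        gcongr
        exact cond _
    _ = ((a + b) / n) ^ #H.edgeFinset := by simp

variable {J : Type*} {k : J → ℕ} [∀ x, NeZero (k x)] {g : ∀ x, Fin (k x) → Fin n}

theorem sbmGraphProb_hasLabels_le (ha : 0 ≤ a) (hb : 0 ≤ b) (hμ : IsProbVec μ)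
    (hν : IsProbVec ν) (han : a ≤ n) (hbn : b ≤ n) [DecidableRel (cycleUnion g).Adj]
    (lab : ∀ x, Fin (k x) → L) :
    sbmGraphProb n a b μ ν {E | ∀ x, HasLabels E (g x) (lab x)} ≤
      ((a + b) / n) ^ #(cycleUnion g).edgeFinset :=
  have edges_present : {E | ∀ x, HasLabels E (g x) (lab x)} ⊆
      {E : EdgeConf n L | ∀ u v, (cycleUnion g).Adj u v → (getLabel E u v).isSome} :=
    fun _ hE _ _ huv => getLabel_isSome_of_hasLabels hE huv
  (sbmGraphProb_mono ha hb hμ hν han hbn edges_present).trans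
    (sbmGraphProb_subgraph_le ha hb hμ hν han hbn _)

variable [Fintype J]

lemma sbmCondProb_hasLabels (hμ : IsProbVec μ) (hν : IsProbVec ν)
    (hg : ∀ x, IsCanonicalCycle (g x)) (hinj : (vertexMap g).Injective)
    (lab : ∀ x, Fin (k x) → L) (σ : Fin n → Bool) :
    sbmCondProb n a b μ ν σ {E | ∀ x, HasLabels E (g x) (lab x)} =
      ∏ x, ∏ i, sbmPairMass n a b μ ν (σ (g x i) == σ (g x (i + 1))) (some (lab x i)) := by
  have ne (x) (i : Fin (k x)) : g x i ≠ g x (i + 1) := fun h =>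
    (hg x).add_one_ne i ((hg x).injective h.symm)
  let e (q : Σ x, Fin (k x)) : Pairs n := edgePair ⟨s(g q.1 q.2, g q.1 (q.2 + 1)), ne _ _⟩
  have he : e.Injective := by
    rintro ⟨x, i⟩ ⟨y, j⟩ h
    obtain ⟨h, -⟩ | ⟨h, h'⟩ := Sym2.eq_iff.1 (congrArg Subtype.val (edgePair_injective h))
    · exact hinj h
    · obtain rfl : x = y := congrArg Sigma.fst (@hinj ⟨x, i⟩ ⟨y, j + 1⟩ h)
      have hi : i = j + 1 := (hg x).injective h
      have hj : i + 1 = j := (hg x).injective h'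
      exact absurd (by rw [hj, hi, add_sub_cancel_right]) ((hg x).add_one_ne_sub_one i)
  have event : {E : EdgeConf n L | ∀ x, HasLabels E (g x) (lab x)} =
      {E | ∀ q, E (e q) ∈ ({some (lab q.1 q.2)} : Set (Option L))} := by
    ext E
    simp [HasLabels, e, Sigma.forall, getLabel_eq_edgePair E (ne _ _)]
  rw [event, sbmCondProb_cylinder hμ hν σ he, Fintype.prod_sigma]
  refine prod_congr rfl fun x _ => prod_congr rfl fun i _ => ?_
  rw [beq_edgePair σ (ne x i), Fintype.sum_eq_single (some (lab x i))]
  · exact Set.indicator_of_mem (Set.mem_singleton _) _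
  · exact fun _ ho => Set.indicator_of_notMem (mt Set.mem_singleton_iff.1 ho) _

lemma sum_types_sbmPairMass {k : ℕ} [NeZero k] (ℓ : Fin k → L) :
    ∑ τ : Fin k → Bool, ∏ i, 1 / 2 * sbmPairMass n a b μ ν (τ i == τ (i + 1)) (some (ℓ i)) =
      2 * k * xiSBM a b μ ν ℓ / n ^ k := by
  have trace := sum_cycle_types (fun i => a / n * μ (ℓ i) / 2) (fun i => b / n * ν (ℓ i) / 2)
  have scale (ε : ℝ) : ∏ i, (a / n * μ (ℓ i) / 2 + ε * (b / n * ν (ℓ i) / 2)) =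
      (∏ i, (a * μ (ℓ i) + ε * (b * ν (ℓ i)))) / (2 ^ k * n ^ k) := by
    rw [← mul_pow, ← Fin.prod_const k, ← prod_div_distrib]
    exact prod_congr rfl fun i _ => by ring
  have plus := scale 1
  have minus := scale (-1)
  simp only [one_mul, neg_one_mul, ← sub_eq_add_neg] at plus minus
  rw [plus, minus] at trace
  convert trace using 3 with τ _ i
  · cases τ i == τ (i + 1) <;> simp [sbmPairMass] <;> ring
  · have := NeZero.ne (k : ℝ)
    rw [xiSBM]
    field_simp
    ring

theorem sbmGraphProb_hasLabels_eq (hμ : IsProbVec μ) (hν : IsProbVec ν)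
    (hg : ∀ x, IsCanonicalCycle (g x)) (hinj : (vertexMap g).Injective)
    (lab : ∀ x, Fin (k x) → L) :
    sbmGraphProb n a b μ ν {E | ∀ x, HasLabels E (g x) (lab x)} =
      ∏ x, 2 * k x * xiSBM a b μ ν (lab x) / n ^ k x := by
  classical
  let F (τ : (Σ x, Fin (k x)) → Bool) : ℝ :=
    ∏ x, ∏ i, sbmPairMass n a b μ ν (τ ⟨x, i⟩ == τ ⟨x, i + 1⟩) (some (lab x i))
  calc sbmGraphProb n a b μ ν {E | ∀ x, HasLabels E (g x) (lab x)}
      = ∑ σ : Fin n → Bool, (∏ _v : Fin n, (1 / 2 : ℝ)) * F fun q => σ (vertexMap g q) := by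
        simp [sbmGraphProb_eq_sum_sbmCondProb, sbmCondProb_hasLabels hμ hν hg hinj, mul_sum, F,
          vertexMap]
    _ = ∑ τ : (Σ x, Fin (k x)) → Bool, (∏ _q : Σ x, Fin (k x), (1 / 2 : ℝ)) * F τ :=
        sum_prod_mul_comp_injective (w := fun _ _ => 1 / 2) (fun _ => by norm_num) hinj F
    _ = ∑ τ : ∀ x, Fin (k x) → Bool, ∏ x, ∏ i,
          1 / 2 * sbmPairMass n a b μ ν (τ x i == τ x (i + 1)) (some (lab x i)) := by
        rw [← (Equiv.piCurry fun (x : J) (_ : Fin (k x)) => Bool).sum_comp]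
        simp only [F, Fintype.prod_sigma, ← prod_mul_distrib]
        rfl
    _ = ∏ x, 2 * k x * xiSBM a b μ ν (lab x) / n ^ k x := by
        simp only [← sum_types_sbmPairMass, prod_univ_sum, Fintype.piFinset_univ]

end BlockModel

/-! ### Asymptotics of factorial moments -/

section Asymptotics

lemma tendsto_descFactorial_div_pow (k : ℕ) :
    Tendsto (fun n : ℕ => (n.descFactorial k : ℝ) / (n : ℝ) ^ k) atTop (𝓝 1) :=
  (Asymptotics.isEquivalent_iff_tendsto_one
    ((eventually_gt_atTop 0).mono fun n hn => by positivity)).1 (isEquivalent_descFactorial k)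

lemma sum_inv_card_pow_card_image_le (κ V : Type*) [Fintype κ] [DecidableEq κ] [Fintype V]
    [DecidableEq V] :
    ∑ g : κ → V, (Fintype.card V : ℝ)⁻¹ ^ #(univ.image g) ≤
      ∑ v ∈ range (Fintype.card κ + 1), (v : ℝ) ^ Fintype.card κ := by
  have card_fiber_le (v : ℕ) :
      #{g : κ → V | #(univ.image g) = v} ≤ Fintype.card V ^ v * v ^ Fintype.card κ := by
    calc #{g : κ → V | #(univ.image g) = v}
        ≤ #((powersetCard v univ).biUnion fun S : Finset V =>
            Fintype.piFinset fun _ : κ => S) := by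
          refine card_le_card fun g hg => mem_biUnion.2 ⟨univ.image g, ?_, ?_⟩
          · exact mem_powersetCard.2 ⟨subset_univ _, (mem_filter.1 hg).2⟩
          · exact Fintype.mem_piFinset.2 fun i => mem_image_of_mem g (mem_univ i)
      _ ≤ #(powersetCard v (univ : Finset V)) * v ^ Fintype.card κ :=
          card_biUnion_le_card_mul _ _ _ fun S hS => by simp [(mem_powersetCard.1 hS).2]
      _ ≤ Fintype.card V ^ v * v ^ Fintype.card κ := by
          rw [card_powersetCard, card_univ]
          exact Nat.mul_le_mul_right _ (Nat.choose_le_pow _ _)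
  rw [← sum_fiberwise_of_maps_to (t := range (Fintype.card κ + 1)) (g := fun g => #(univ.image g))
    fun g _ => mem_range_succ_iff.2 card_image_le]
  refine sum_le_sum fun v _ => ?_
  calc ∑ g : κ → V with #(univ.image g) = v, (Fintype.card V : ℝ)⁻¹ ^ #(univ.image g)
      = #{g : κ → V | #(univ.image g) = v} * (Fintype.card V : ℝ)⁻¹ ^ v := by
        rw [← nsmul_eq_mul, ← sum_const]
        exact sum_congr rfl fun g hg => by rw [(mem_filter.1 hg).2]
    _ ≤ (Fintype.card V ^ v * v ^ Fintype.card κ) * (Fintype.card V : ℝ)⁻¹ ^ v := by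
        gcongr
        exact_mod_cast card_fiber_le v
    _ = ((Fintype.card V : ℝ) * (Fintype.card V : ℝ)⁻¹) ^ v * v ^ Fintype.card κ := by ring
    _ ≤ (v : ℝ) ^ Fintype.card κ :=
        mul_le_of_le_one_left (by positivity) (pow_le_one₀ (by positivity) mul_inv_le_one)

variable {J : Type*} [Fintype J] [DecidableEq J] {k : J → ℕ} [∀ x, NeZero (k x)]

lemma card_forall_isCanonicalCycle_mul (n : ℕ) (hk : ∀ x, 3 ≤ k x) :
    #{g : ∀ x, Fin (k x) → Fin n | ∀ x, IsCanonicalCycle (g x)} * ∏ x, (2 * k x) =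
      ∏ x, n.descFactorial (k x) := by
  have factor : ({g : ∀ x, Fin (k x) → Fin n | ∀ x, IsCanonicalCycle (g x)} : Finset _) =
      Fintype.piFinset fun x => {c | IsCanonicalCycle c} := by
    ext g
    simp only [mem_filter_univ, Fintype.mem_piFinset]
  rw [factor, Fintype.card_piFinset, ← prod_mul_distrib]
  exact prod_congr rfl fun x _ => by rw [card_isCanonicalCycle_mul _ (hk x), Fintype.card_fin]

omit [∀ x, NeZero (k x)] in
lemma card_injective_vertexMap (n : ℕ) :
    #{g : ∀ x, Fin (k x) → Fin n | (vertexMap g).Injective} = n.descFactorial (∑ x, k x) := by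
  have card_index : Fintype.card (Σ x, Fin (k x)) = ∑ x, k x := by simp
  conv_rhs => rw [← card_index, ← Fintype.card_fin n, ← card_filter_injective]
  refine card_equiv (Equiv.piCurry fun x (_ : Fin (k x)) => Fin n).symm fun g => ?_
  simp only [mem_filter_univ]
  rfl

lemma tendsto_card_forall_isCanonicalCycle (hk : ∀ x, 3 ≤ k x) :
    Tendsto (fun n : ℕ => (#{g : ∀ x, Fin (k x) → Fin n | ∀ x, IsCanonicalCycle (g x)} : ℝ) /
      n ^ ∑ x, k x) atTop (𝓝 (∏ x, (2 * k x : ℝ))⁻¹) := by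
  have lim := (tendsto_finsetProd univ fun x _ => tendsto_descFactorial_div_pow (k x)).mul_const
    (∏ x, (2 * k x : ℝ))⁻¹
  simp only [prod_const_one, one_mul] at lim
  refine lim.congr fun n => ?_
  have count : (#{g : ∀ x, Fin (k x) → Fin n | ∀ x, IsCanonicalCycle (g x)} : ℝ) *
      ∏ x, (2 * k x : ℝ) = ∏ x, (n.descFactorial (k x) : ℝ) := by
    exact_mod_cast card_forall_isCanonicalCycle_mul n hk
  have : ∏ x, (2 * k x : ℝ) ≠ 0 :=
    prod_ne_zero_iff.2 fun x _ => mul_ne_zero two_ne_zero (NeZero.ne _)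
  rw [prod_div_distrib, prod_pow_eq_pow_sum, ← count]
  field_simp

lemma tendsto_card_disjoint_cycleFamilies (hk : ∀ x, 3 ≤ k x) :
    Tendsto (fun n : ℕ => (#{g : ∀ x, Fin (k x) → Fin n |
      (∀ x, IsCanonicalCycle (g x)) ∧ (vertexMap g).Injective} : ℝ) / n ^ ∑ x, k x)
      atTop (𝓝 (∏ x, (2 * k x : ℝ))⁻¹) := by
  have upper := tendsto_card_forall_isCanonicalCycle hk
  have lower := upper.add ((tendsto_descFactorial_div_pow (∑ x, k x)).sub_const 1)
  simp only [sub_self, add_zero] at lower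
  refine tendsto_of_tendsto_of_tendsto_of_le_of_le' lower upper ?_ ?_
  · filter_upwards [eventually_gt_atTop 0] with n hn
    have inclusion_exclusion :
        #{g : ∀ x, Fin (k x) → Fin n | ∀ x, IsCanonicalCycle (g x)} + n.descFactorial (∑ x, k x) ≤
          #{g : ∀ x, Fin (k x) → Fin n |
            (∀ x, IsCanonicalCycle (g x)) ∧ (vertexMap g).Injective} + n ^ ∑ x, k x := by
      rw [← card_injective_vertexMap, ← card_union_add_card_inter, ← filter_and, add_comm]
      gcongr
      exact (card_le_univ _).trans_eq (by simp [prod_pow_eq_pow_sum])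
    have npow_pos : (0 : ℝ) < n ^ ∑ x, k x := by positivity
    rw [← div_self npow_pos.ne', ← sub_div, ← add_div]
    gcongr
    rw [← add_sub_assoc, sub_le_iff_le_add]
    exact_mod_cast inclusion_exclusion
  · refine Eventually.of_forall fun n => ?_
    gcongr with g
    exact And.left

variable [Fintype L] {a b : ℝ} {μ ν : L → ℝ}

theorem tendsto_sum_disjoint (hμ : IsProbVec μ) (hν : IsProbVec ν) (hk : ∀ x, 3 ≤ k x)
    (lab : ∀ x, Fin (k x) → L) :
    Tendsto (fun n : ℕ => ∑ g : ∀ x, Fin (k x) → Fin n with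
        (∀ x, IsCanonicalCycle (g x)) ∧ (vertexMap g).Injective,
        sbmGraphProb n a b μ ν {E | ∀ x, HasLabels E (g x) (lab x)})
      atTop (𝓝 (∏ x, xiSBM a b μ ν (lab x))) := by
  have lim := (tendsto_card_disjoint_cycleFamilies hk).mul_const
    (∏ x, 2 * k x * xiSBM a b μ ν (lab x))
  have : ∏ x, (2 * k x : ℝ) ≠ 0 :=
    prod_ne_zero_iff.2 fun x _ => mul_ne_zero two_ne_zero (NeZero.ne _)
  rw [prod_mul_distrib, inv_mul_cancel_left₀ this] at lim
  refine lim.congr fun n => ?_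
  rw [sum_congr rfl fun g hg => sbmGraphProb_hasLabels_eq hμ hν ((mem_filter_univ g).1 hg).1
    ((mem_filter_univ g).1 hg).2 lab, sum_const, nsmul_eq_mul, prod_div_distrib,
    prod_pow_eq_pow_sum, ← prod_mul_distrib]
  ring

omit [DecidableEq J] in
lemma sbmGraphProb_hasLabels_le_of_overlapping (ha : 0 ≤ a) (hb : 0 ≤ b) (hμ : IsProbVec μ)
    (hν : IsProbVec ν) {n : ℕ} (hn : a + b + 1 ≤ n) {g : ∀ x, Fin (k x) → Fin n}
    (hg : IsCycleFamily g) (hoverlap : ¬ (vertexMap g).Injective) (lab : ∀ x, Fin (k x) → L) :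
    sbmGraphProb n a b μ ν {E | ∀ x, HasLabels E (g x) (lab x)} ≤
      (a + b + 1) ^ (∑ x, k x + 1) / n * (n : ℝ)⁻¹ ^ #(univ.image (vertexMap g)) := by
  classical
  have n_pos : (0 : ℝ) < n := by linarith
  have more_edges : #(univ.image (vertexMap g)) < #(cycleUnion g).edgeFinset :=
    not_le.1 fun h => hoverlap (injective_vertexMap_of_card_edgeFinset_le hg h)
  have card_image_le_sum : #(univ.image (vertexMap g)) ≤ ∑ x, k x :=
    card_image_le.trans_eq (by simp)
  calc sbmGraphProb n a b μ ν {E | ∀ x, HasLabels E (g x) (lab x)}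
      ≤ ((a + b) / n) ^ #(cycleUnion g).edgeFinset :=
        sbmGraphProb_hasLabels_le ha hb hμ hν (by linarith) (by linarith) lab
    _ ≤ ((a + b + 1) / n) ^ #(cycleUnion g).edgeFinset :=
        pow_le_pow_left₀ (by positivity) (by gcongr ?_ / _; linarith) _
    _ ≤ ((a + b + 1) / n) ^ (#(univ.image (vertexMap g)) + 1) :=
        pow_le_pow_of_le_one (by positivity) ((div_le_one n_pos).2 hn) more_edges
    _ = (a + b + 1) ^ (#(univ.image (vertexMap g)) + 1) / n *
          (n : ℝ)⁻¹ ^ #(univ.image (vertexMap g)) := by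
        rw [div_pow, inv_pow, pow_succ (n : ℝ)]
        field_simp
    _ ≤ (a + b + 1) ^ (∑ x, k x + 1) / n * (n : ℝ)⁻¹ ^ #(univ.image (vertexMap g)) := by
        gcongr
        linarith

theorem tendsto_sum_overlapping (ha : 0 ≤ a) (hb : 0 ≤ b) (hμ : IsProbVec μ) (hν : IsProbVec ν)
    (lab : ∀ x, Fin (k x) → L) :
    Tendsto (fun n : ℕ => ∑ g : ∀ x, Fin (k x) → Fin n with
        IsCycleFamily g ∧ ¬ (vertexMap g).Injective,
        sbmGraphProb n a b μ ν {E | ∀ x, HasLabels E (g x) (lab x)})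
      atTop (𝓝 0) := by
  let κ := Σ x, Fin (k x)
  let C : ℝ := (a + b + 1) ^ (∑ x, k x + 1)
  let S : ℝ := ∑ v ∈ range (Fintype.card κ + 1), (v : ℝ) ^ Fintype.card κ
  refine tendsto_of_tendsto_of_tendsto_of_le_of_le' tendsto_const_nhds
    (tendsto_const_div_atTop_nhds_zero_nat (C * S)) ?_ ?_
  all_goals
    filter_upwards [tendsto_natCast_atTop_atTop.eventually_ge_atTop (a + b + 1)] with n hn
  · exact sum_nonneg fun g _ =>
      sbmGraphProb_nonneg ha hb hμ hν (by linarith) (by linarith) _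
  · calc _ ≤ ∑ g : ∀ x, Fin (k x) → Fin n with IsCycleFamily g ∧ ¬ (vertexMap g).Injective,
            C / n * (n : ℝ)⁻¹ ^ #(univ.image (vertexMap g)) :=
          sum_le_sum fun g hg => have hg := (mem_filter_univ g).1 hg
            sbmGraphProb_hasLabels_le_of_overlapping ha hb hμ hν hn hg.1 hg.2 lab
      _ ≤ ∑ g : ∀ x, Fin (k x) → Fin n, C / n * (n : ℝ)⁻¹ ^ #(univ.image (vertexMap g)) :=
          sum_le_sum_of_subset_of_nonneg (subset_univ _) fun g _ _ => by positivity
      _ = C / n * ∑ g : κ → Fin n, (Fintype.card (Fin n) : ℝ)⁻¹ ^ #(univ.image g) := by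
          rw [← mul_sum, ← (Equiv.piCurry fun x (_ : Fin (k x)) => Fin n).sum_comp,
            Fintype.card_fin]
          rfl
      _ ≤ C / n * S := by
          gcongr
          exact sum_inv_card_pow_card_image_le κ (Fin n)
      _ = C * S / n := div_mul_eq_mul_div _ _ _

end Asymptotics

/-! ### Factorial moments of cycle counts -/

section CycleCountMoments

variable {I : Type*} [Fintype I] {k : I → ℕ} [∀ i, NeZero (k i)]
  {lab : ∀ i, Fin (k i) → L}

lemma HasLabels.sigma_eq {n k k' : ℕ} [NeZero k] [NeZero k'] {E : EdgeConf n L}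
    {c : Fin k → Fin n} {c' : Fin k' → Fin n} {ℓ : Fin k → L} {ℓ' : Fin k' → L}
    (h : HasLabels E c ℓ) (h' : HasLabels E c' ℓ')
    (hc : (⟨k, c⟩ : Σ k, Fin k → Fin n) = ⟨k', c'⟩) : (⟨k, ℓ⟩ : Σ k, Fin k → L) = ⟨k', ℓ'⟩ := by
  cases hc
  rw [funext fun i => Option.some.inj ((h i).symm.trans (h' i))]

lemma prod_descFactorial_cycleCount [DecidableEq I] [DecidableEq L]
    (hlab : (fun i => (⟨k i, lab i⟩ : Σ k, Fin k → L)).Injective) (r : I → ℕ) {n : ℕ}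
    (E : EdgeConf n L) :
    ∏ i, (cycleCount n (k i) E (lab i)).descFactorial (r i) =
      #{g : ∀ x : Σ i, Fin (r i), Fin (k x.1) → Fin n |
        IsCycleFamily g ∧ ∀ x, HasLabels E (g x) (lab x.1)} := by
  have factor (i : I) : (cycleCount n (k i) E (lab i)).descFactorial (r i) =
      #{h : Fin (r i) → Fin (k i) → Fin n |
        h.Injective ∧ ∀ j, IsCanonicalCycle (h j) ∧ HasLabels E (h j) (lab i)} := by
    rw [cycleCount_eq_card]
    simpa only [mem_filter_univ, Fintype.card_fin] using
      (card_filter_injective_forall_mem (Fin (r i))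
        {c : Fin (k i) → Fin n | IsCanonicalCycle c ∧ HasLabels E c (lab i)}).symm
  simp only [factor, ← Fintype.card_piFinset]
  refine (card_equiv (Equiv.piCurry fun i (_ : Fin (r i)) => Fin (k i) → Fin n) fun g => ?_).symm
  simp only [mem_filter_univ, Fintype.mem_piFinset]
  constructor
  · rintro ⟨hg, hE⟩ i
    refine ⟨fun j j' hjj' => ?_, fun j => ⟨hg.isCanonicalCycle ⟨i, j⟩, hE ⟨i, j⟩⟩⟩
    exact eq_of_heq (Sigma.mk.inj_iff.1 (hg.distinct (congrArg (Sigma.mk (k i)) hjj'))).2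
  · refine fun h => ⟨⟨fun x => ((h x.1).2 x.2).1, ?_⟩, fun x => ((h x.1).2 x.2).2⟩
    rintro ⟨i, j⟩ ⟨i', j'⟩ hjj'
    obtain rfl : i = i' := hlab (((h i).2 j).2.sigma_eq ((h i').2 j').2 hjj')
    rw [(h i).1 (eq_of_heq (Sigma.mk.inj_iff.1 hjj').2)]

variable [Fintype L] [DecidableEq L] {a b : ℝ} {μ ν : L → ℝ}

theorem tendsto_factorialMoment_cycleCount (ha : 0 ≤ a) (hb : 0 ≤ b) (hμ : IsProbVec μ)
    (hν : IsProbVec ν) (hk : ∀ i, 3 ≤ k i)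
    (hlab : (fun i => (⟨k i, lab i⟩ : Σ k, Fin k → L)).Injective) (r : I → ℕ) :
    Tendsto (fun n : ℕ => ∑ x, sbmMass n a b μ ν x *
        ∏ i, ((cycleCount n (k i) x.2 (lab i)).descFactorial (r i) : ℝ))
      atTop (𝓝 (∏ i, xiSBM a b μ ν (lab i) ^ r i)) := by
  have := Classical.decEq I
  have disjoint := tendsto_sum_disjoint (a := a) (b := b) hμ hν
    (fun x : Σ i, Fin (r i) => hk x.1) fun x => lab x.1
  have overlapping := tendsto_sum_overlapping (k := fun x : Σ i, Fin (r i) => k x.1)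
    ha hb hμ hν fun x => lab x.1
  have lim := disjoint.add overlapping
  simp only [add_zero, Fintype.prod_sigma, prod_const, card_univ, Fintype.card_fin] at lim
  refine lim.congr fun n => ?_
  have split (g : ∀ x : Σ i, Fin (r i), Fin (k x.1) → Fin n) :
      (∀ x, IsCanonicalCycle (g x)) ∧ (vertexMap g).Injective ↔
        IsCycleFamily g ∧ (vertexMap g).Injective :=
    and_congr_left fun hinj =>
      ⟨fun hg => isCycleFamily_of_injective_vertexMap hg hinj, fun hg => hg.isCanonicalCycle⟩
  simp only [split, ← Nat.cast_prod, prod_descFactorial_cycleCount hlab r, ← filter_filter]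
  rw [sum_filter_add_sum_filter_not]
  simp only [← sum_sbmMass_mul_card]

end CycleCountMoments

/-- **Lemma (Cycle counts under the labeled SBM, Lemma 2, second part).**
For any fixed `m ≥ 3`, the cycle counts `{X_n([ℓ]_k) : [ℓ]_k ∈ 𝓛^k, 3 ≤ k ≤ m}`
converge jointly in distribution under `ℙ_n` to independent Poisson random variables
with means `ξ([ℓ]_k)`; since the variables are ℕ-valued, this is expressed as pointwise
convergence of the joint probability mass function. -/
theorem cycle_counts_sbm
    {L : Type*} [Fintype L] [DecidableEq L] (a b : ℝ) (ha : 0 < a) (hb : 0 < b)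
    (μ ν : L → ℝ) (hμ : IsProbVec μ) (hν : IsProbVec ν)
    (m : ℕ) (hm : 3 ≤ m) (target : (k : ℕ) → (Fin k → L) → ℕ) :
    Filter.Tendsto (fun n : ℕ =>
      sbmGraphProb n a b μ ν
        {E | ∀ (k : ℕ), 3 ≤ k → k ≤ m → ∀ ℓ : Fin k → L,
          cycleCount n k E ℓ = target k ℓ})
      Filter.atTop
      (nhds (∏ k ∈ Finset.Icc 3 m, ∏ ℓ : Fin k → L,
        poissonPMF (xiSBM a b μ ν ℓ) (target k ℓ))) := by
  let I := Σ k : Icc 3 m, Fin k → L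
  have three_le (i : I) : 3 ≤ (i.1 : ℕ) := (mem_Icc.1 i.1.2).1
  have (i : I) : NeZero (i.1 : ℕ) := ⟨by have := three_le i; omega⟩
  have labels_injective : (fun i : I => (⟨i.1, i.2⟩ : Σ k, Fin k → L)).Injective :=
    Subtype.val_injective.sigma_map (β₂ := fun k => Fin k → L) fun _ => Function.injective_id
  have moments := tendsto_factorialMoment_cycleCount (lab := fun i : I => i.2) ha.le hb.le hμ hν
    three_le labels_injective
  have lim := tendsto_poissonPMF_of_tendsto_factorialMoment
    (Ω := fun n : ℕ => (Fin n → Bool) × EdgeConf n L)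
    (X := fun n (i : I) x => cycleCount n i.1 x.2 i.2)
    (eventually_sbmMass_nonneg ha.le hb.le hμ hν) moments fun i => target i.1 i.2
  rw [Fintype.prod_sigma,
    prod_coe_sort (Icc 3 m) fun k => ∏ ℓ : Fin k → L, poissonPMF _ (target k ℓ)] at lim
  refine lim.congr fun n => sum_congr rfl fun x _ => ?_
  congr 1
  ext y
  simp [I, Sigma.forall]

end LSBM
end

section
/- Let ℙ_n denote the distribution of the observed labeled graph (G, L) under the labeled stochastic block model 𝒢(n, a/n, b/n, μ, ν), and let ℙ'_n denote the distribution of the labeled Erdős–Rényi graph 𝒢(n, (a+b)/2). Define the likelihood ratio Y_n(G, L) = ℙ_n(G, L)/ℙ'_n(G, L) = 2^{−n}·Σ_{σ∈{±1}^n} ∏_{u<v} W_{uv}(G, L, σ), where W_{uv}(G, L, σ) equals 2a·μ(ℓ)/(a·μ(ℓ)+b·ν(ℓ)) if σ_u = σ_v, (u,v) ∈ E(G), L_{uv} = ℓ; equals 2b·ν(ℓ)/(a·μ(ℓ)+b·ν(ℓ)) if σ_u ≠ σ_v, (u,v) ∈ E(G), L_{uv} = ℓ; equals (1−a/n)/(1−(a+b)/(2n))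 if σ_u = σ_v, (u,v) ∉ E(G); and equals (1−b/n)/(1−(a+b)/(2n)) if σ_u ≠ σ_v, (u,v) ∉ E(G). If τ < 1, then E_{ℙ'_n}[Y_n²] → exp(−τ/2 − τ²/4)/√(1 − τ) as n → ∞. -/
open Finset Filter Real

namespace LSBM

variable {L : Type*}

/-!
Under `ℙ'_n` the likelihood factor of a pair is `1 + s X`, where `s = ±1` says whether the two
types agree, and `X` is centred with variance `γ_n` such that `n γ_n → τ`. Hence `E[Y_n²]` averages
`∏_{u<v} (1 + γ_n σ_u σ_v ρ_u ρ_v)` over independent type assignments `σ`, `ρ`. The product depends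
only on `η = σρ`, so the average is the partition function of a Curie–Weiss model. Since
`1 + g s = √(1 - g²) exp (s artanh g)` for `s = ±1`, its weights are exponentials of the squared
total spin `(∑ η_u)²`. The Hubbard–Stratonovich identity `exp (x² / 2) = E[exp (x Z)]` with `Z`
standard normal decouples the spins and leaves `E[cosh (√(artanh γ_n) Z) ^ n]`, which tends to
`E[exp (τ Z² / 2)] = 1 / √(1 - τ)` by dominated convergence. The prefactors contribute
`exp (-τ / 2 - τ² / 4)`.
-/

section SpinSums

/-- The value `±1` of a Boolean, with the convention `true ↦ 1` of `signVec`. It is used for the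
agreement status `σ u == σ v` of a pair. -/
def boolSign (s : Bool) : ℝ := if s then 1 else -1

lemma boolSign_sq (s : Bool) : boolSign s ^ 2 = 1 := by cases s <;> simp [boolSign]

lemma boolSign_beq (s t : Bool) : boolSign (s == t) = boolSign s * boolSign t := by
  cases s <;> cases t <;> simp [boolSign]

lemma signVec_apply {n : ℕ} (η : Fin n → Bool) (u : Fin n) : signVec η u = boolSign (η u) := rfl

lemma signVec_sq {n : ℕ} (η : Fin n → Bool) (u : Fin n) : signVec η u ^ 2 = 1 := boolSign_sq (η u)

lemma sum_exp_sum_mul_signVec {n : ℕ} (x : Fin n → ℝ) :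
    ∑ η : Fin n → Bool, exp (∑ u, x u * signVec η u) = ∏ u, (2 * cosh (x u)) := by
  simp only [exp_sum, signVec_apply]
  rw [← Fintype.prod_sum fun u s => exp (x u * boolSign s)]
  refine prod_congr rfl fun u _ => ?_
  rw [Fintype.sum_bool, cosh_eq]
  simp only [boolSign, if_true, Bool.false_eq_true, if_false, mul_one, mul_neg]
  ring

lemma sum_sum_beq {ι M : Type*} [Fintype ι] [DecidableEq ι] [AddCommMonoid M]
    (F : (ι → Bool) → M) :
    ∑ σ : ι → Bool, ∑ ρ : ι → Bool, F (fun i => σ i == ρ i) =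
      2 ^ Fintype.card ι • ∑ η, F η := by
  have reindex (σ : ι → Bool) : ∑ ρ : ι → Bool, F (fun i => σ i == ρ i) = ∑ η, F η := by
    have involutive : Function.Involutive fun (ρ : ι → Bool) i => σ i == ρ i := fun ρ => by
      funext i
      cases σ i <;> simp
    exact Equiv.sum_comp (involutive.toPerm _) F
  simp only [reindex, sum_const, card_univ, Fintype.card_fun, Fintype.card_bool]

lemma sum_pairs_eq_sum_ite {M : Type*} [AddCommMonoid M] {n : ℕ} (f : Fin n → Fin n → M) :
    ∑ p : Pairs n, f p.1.1 p.1.2 = ∑ u, ∑ v, if u < v then f u v else 0 := by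
  rw [← Fintype.sum_prod_type' (f := fun u v => if u < v then f u v else 0), ← sum_filter]
  exact (sum_subtype _ (by simp) fun p : Fin n × Fin n => f p.1 p.2).symm

lemma sq_sum_eq_sum_sq_add_two_mul_sum_pairs {R : Type*} [CommSemiring R] {n : ℕ}
    (x : Fin n → R) :
    (∑ u, x u) ^ 2 = ∑ u, x u ^ 2 + 2 * ∑ p : Pairs n, x p.1.1 * x p.1.2 := by
  have diag : ∑ u, x u ^ 2 = ∑ u, ∑ v, if u = v then x u * x v else 0 := by simp [sq]
  have upper := sum_pairs_eq_sum_ite fun u v => x u * x v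
  have lower : ∑ p : Pairs n, x p.1.1 * x p.1.2 = ∑ u, ∑ v, if v < u then x u * x v else 0 := by
    rw [upper, sum_comm]
    simp only [mul_comm]
  rw [sq, sum_mul_sum, two_mul]
  nth_rw 1 [upper]
  rw [lower, diag]
  simp only [← sum_add_distrib]
  refine sum_congr rfl fun u _ => sum_congr rfl fun v _ => ?_
  rcases lt_trichotomy u v with h | rfl | h
  · simp [h, h.not_gt, h.ne]
  · simp
  · simp [h, h.not_gt, h.ne']

lemma card_pairs (n : ℕ) : (Fintype.card (Pairs n) : ℝ) = n * (n - 1) / 2 := by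
  have h := sq_sum_eq_sum_sq_add_two_mul_sum_pairs fun _ : Fin n => (1 : ℝ)
  simp only [sum_const, card_univ, Fintype.card_fin, one_pow, mul_one, nsmul_eq_mul] at h
  linarith

lemma sum_pairs_signVec_mul {n : ℕ} (η : Fin n → Bool) :
    ∑ p : Pairs n, signVec η p.1.1 * signVec η p.1.2 = ((∑ u, signVec η u) ^ 2 - n) / 2 := by
  rw [sq_sum_eq_sum_sq_add_two_mul_sum_pairs]
  simp [signVec_sq]

end SpinSums

section Gaussian

open MeasureTheory ProbabilityTheory

lemma integral_exp_mul_gaussianReal (t : ℝ) :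
    ∫ z, exp (t * z) ∂(gaussianReal 0 1) = exp (t ^ 2 / 2) := by
  simpa [mgf] using congrFun (mgf_id_gaussianReal (μ := 0) (v := 1)) t

lemma gaussianPDFReal_mul_exp_sq (s z : ℝ) :
    gaussianPDFReal 0 1 z * exp (s * z ^ 2 / 2) =
      (√(2 * π))⁻¹ * exp (-((1 - s) / 2) * z ^ 2) := by
  simp only [gaussianPDFReal, NNReal.coe_one, mul_one, sub_zero]
  rw [mul_assoc, ← exp_add]
  congr 2
  ring

lemma integrable_exp_mul_sq_gaussianReal {s : ℝ} (hs : s < 1) :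
    Integrable (fun z => exp (s * z ^ 2 / 2)) (gaussianReal 0 1) := by
  rw [gaussianReal_of_var_ne_zero 0 one_ne_zero,
    integrable_withDensity_iff_integrable_smul' (measurable_gaussianPDF 0 1)
      (ae_of_all _ fun _ => gaussianPDF_lt_top)]
  simp only [toReal_gaussianPDF, smul_eq_mul, gaussianPDFReal_mul_exp_sq]
  exact (integrable_exp_neg_mul_sq (by linarith)).const_mul _

lemma integral_exp_mul_sq_gaussianReal {s : ℝ} (hs : s < 1) :
    ∫ z, exp (s * z ^ 2 / 2) ∂(gaussianReal 0 1) = 1 / √(1 - s) := by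
  rw [integral_gaussianReal_eq_integral_smul one_ne_zero]
  simp only [smul_eq_mul, gaussianPDFReal_mul_exp_sq]
  rw [integral_const_mul, integral_gaussian, ← sqrt_inv, ← sqrt_mul (by positivity), one_div,
    ← sqrt_inv]
  congr 1
  have : 1 - s ≠ 0 := by linarith
  field_simp

lemma mean_exp_sq_sum_mul_signVec {n : ℕ} (x : Fin n → ℝ) :
    (1 / 2 : ℝ) ^ n * ∑ η : Fin n → Bool, exp ((∑ u, x u * signVec η u) ^ 2 / 2) =
      ∫ z, ∏ u, cosh (x u * z) ∂(gaussianReal 0 1) := by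
  simp only [← integral_exp_mul_gaussianReal]
  rw [← integral_finsetSum _ fun _ _ => integrable_exp_mul_gaussianReal _, ← integral_const_mul]
  congr 1
  funext z
  have spin_sum := sum_exp_sum_mul_signVec fun u => x u * z
  simp only [mul_right_comm (x _) z, ← sum_mul] at spin_sum
  rw [spin_sum, prod_mul_distrib, prod_const, card_univ, Fintype.card_fin, ← mul_assoc, ← mul_pow]
  norm_num

lemma one_add_sq_div_two_le_cosh (x : ℝ) : 1 + x ^ 2 / 2 ≤ cosh x := by
  have half_angle : cosh x = 1 + 2 * sinh (x / 2) ^ 2 := by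
    have double := cosh_two_mul (x / 2)
    rw [mul_div_cancel₀ x two_ne_zero, cosh_sq] at double
    linarith
  have le_sinh : (x / 2) ^ 2 ≤ sinh (x / 2) ^ 2 := by
    rw [sq_le_sq, abs_sinh]
    exact self_le_sinh_iff.2 (abs_nonneg _)
  rw [half_angle]
  linarith

lemma cosh_pow_le_exp (x : ℝ) (n : ℕ) : cosh x ^ n ≤ exp (n * x ^ 2 / 2) :=
  calc cosh x ^ n ≤ exp (x ^ 2 / 2) ^ n :=
        pow_le_pow_left₀ (cosh_pos x).le (cosh_le_exp_half_sq x) n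
    _ = exp (n * x ^ 2 / 2) := by rw [← exp_nat_mul, mul_div_assoc]

lemma tendsto_cosh_pow {x : ℕ → ℝ} {t : ℝ} (hx : Tendsto (fun n => n * x n ^ 2) atTop (nhds t)) :
    Tendsto (fun n => cosh (x n) ^ n) atTop (nhds (exp (t / 2))) := by
  have lower : Tendsto (fun n => (1 + x n ^ 2 / 2) ^ n) atTop (nhds (exp (t / 2))) :=
    tendsto_one_add_pow_exp_of_tendsto (by simpa only [mul_div_assoc] using hx.div_const 2)
  have upper : Tendsto (fun n => exp (n * x n ^ 2 / 2)) atTop (nhds (exp (t / 2))) :=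
    (continuous_exp.tendsto _).comp (hx.div_const 2)
  exact tendsto_of_tendsto_of_tendsto_of_le_of_le lower upper
    (fun n => pow_le_pow_left₀ (by positivity) (one_add_sq_div_two_le_cosh _) n)
    fun n => cosh_pow_le_exp _ n

lemma tendsto_integral_cosh_pow_gaussianReal {x : ℕ → ℝ} {t : ℝ} (ht : t < 1)
    (hx : Tendsto (fun n => n * x n ^ 2) atTop (nhds t)) :
    Tendsto (fun n => ∫ z, cosh (x n * z) ^ n ∂(gaussianReal 0 1)) atTop
      (nhds (1 / √(1 - t))) := by
  obtain ⟨s, hts, hs⟩ := exists_between ht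
  rw [← integral_exp_mul_sq_gaussianReal ht]
  refine tendsto_integral_filter_of_dominated_convergence (fun z => exp (s * z ^ 2 / 2)) ?_ ?_
    (integrable_exp_mul_sq_gaussianReal hs) (ae_of_all _ fun z => tendsto_cosh_pow ?_)
  · refine Eventually.of_forall fun n => Continuous.aestronglyMeasurable ?_
    fun_prop
  · filter_upwards [hx.eventually (gt_mem_nhds hts)] with n hn
    refine ae_of_all _ fun z => ?_
    rw [norm_of_nonneg (pow_nonneg (cosh_pos _).le _)]
    refine (cosh_pow_le_exp _ n).trans (exp_le_exp.2 ?_)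
    rw [mul_pow, ← mul_assoc]
    gcongr
  · simpa only [mul_pow, ← mul_assoc] using hx.mul_const (z ^ 2)

end Gaussian

section LogAsymptotics

variable {ι : Type*} {l : Filter ι} {c x : ι → ℝ} {t : ℝ}

lemma tendsto_mul_log_one_add (hx : Tendsto x l (nhds 0))
    (hcx : Tendsto (fun i => c i * x i) l (nhds t)) :
    Tendsto (fun i => c i * log (1 + x i)) l (nhds t) := by
  have deriv_log : HasDerivAt (fun y => log (1 + y)) 1 0 := by
    simpa using ((hasDerivAt_id (0 : ℝ)).const_add 1).log (by simp)
  have log_equiv : Asymptotics.IsEquivalent l (fun i => log (1 + x i)) x := by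
    rw [Asymptotics.IsEquivalent]
    simpa [Function.comp_def, Pi.sub_def] using deriv_log.isLittleO.comp_tendsto hx
  exact (Asymptotics.IsEquivalent.refl.mul log_equiv).symm.tendsto_nhds hcx

lemma tendsto_mul_artanh (hx : Tendsto x l (nhds 0))
    (hcx : Tendsto (fun i => c i * x i) l (nhds t)) :
    Tendsto (fun i => c i * artanh (x i)) l (nhds t) := by
  have log_add := tendsto_mul_log_one_add hx hcx
  have log_sub := tendsto_mul_log_one_add (c := c) (x := fun i => -x i) (t := -t)
    (by simpa using hx.neg) (by simpa using hcx.neg)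
  have limit := (log_add.sub log_sub).div_const 2
  rw [show (t - -t) / 2 = t by ring] at limit
  refine limit.congr' ?_
  filter_upwards [hx.eventually (Ioo_mem_nhds neg_one_lt_zero one_pos)] with i hi
  rw [artanh_eq_half_log (Set.Ioo_subset_Icc_self hi),
    log_div (by linarith [hi.1]) (by linarith [hi.2]), ← sub_eq_add_neg]
  ring

end LogAsymptotics

section CurieWeiss

open MeasureTheory ProbabilityTheory

/-- The partition function of the Curie–Weiss (mean-field Ising) model: the mean of
`∏_{u<v} (1 + g η_u η_v)` over uniform spins `η ∈ {±1}ⁿ`. The coupling `g` is the hyperbolic tangent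
of the inverse temperature. -/
noncomputable def curieWeiss (n : ℕ) (g : ℝ) : ℝ :=
  (1 / 2 : ℝ) ^ n * ∑ η : Fin n → Bool,
    ∏ p : Pairs n, (1 + g * (signVec η p.1.1 * signVec η p.1.2))

lemma one_add_mul_eq_sqrt_mul_exp_artanh {g s : ℝ} (hg : g ∈ Set.Ioo (-1) 1) (hs : s ^ 2 = 1) :
    1 + g * s = √(1 - g ^ 2) * exp (artanh g * s) := by
  have exp_eq : exp (artanh g * s) = cosh (artanh g) + s * sinh (artanh g) := by
    rcases sq_eq_one_iff.1 hs with rfl | rfl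
    · rw [mul_one, one_mul, cosh_add_sinh]
    · rw [mul_neg_one, neg_one_mul, ← sub_eq_add_neg, cosh_sub_sinh]
  have sqrt_pos : 0 < √(1 - g ^ 2) := Real.sqrt_pos.2 (by nlinarith [hg.1, hg.2])
  rw [exp_eq, cosh_artanh hg, sinh_artanh hg]
  field_simp

lemma prod_pairs_one_add_mul_signVec {n : ℕ} {g : ℝ} (hg : g ∈ Set.Ioo (-1) 1)
    (η : Fin n → Bool) :
    ∏ p : Pairs n, (1 + g * (signVec η p.1.1 * signVec η p.1.2)) =
      √(1 - g ^ 2) ^ Fintype.card (Pairs n) *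
        exp (artanh g * ((∑ u, signVec η u) ^ 2 - n) / 2) := by
  have pair_sq (p : Pairs n) : (signVec η p.1.1 * signVec η p.1.2) ^ 2 = 1 := by
    rw [mul_pow, signVec_sq, signVec_sq, one_mul]
  simp only [one_add_mul_eq_sqrt_mul_exp_artanh hg (pair_sq _), prod_mul_distrib, prod_const,
    card_univ, ← exp_sum, ← mul_sum, sum_pairs_signVec_mul, mul_div_assoc]

lemma curieWeiss_eq (n : ℕ) {g : ℝ} (hg : g ∈ Set.Ico 0 1) :
    curieWeiss n g = √(1 - g ^ 2) ^ Fintype.card (Pairs n) * exp (-(n * artanh g) / 2) *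
      ∫ z, cosh (√(artanh g) * z) ^ n ∂(gaussianReal 0 1) := by
  have spin_mean := mean_exp_sq_sum_mul_signVec fun _ : Fin n => √(artanh g)
  simp only [← mul_sum, mul_pow, sq_sqrt (artanh_nonneg hg.1), prod_const, card_univ,
    Fintype.card_fin] at spin_mean
  rw [curieWeiss, ← spin_mean, mul_left_comm, mul_sum univ _ (_ * _)]
  congr 1
  refine sum_congr rfl fun η _ => ?_
  rw [prod_pairs_one_add_mul_signVec ⟨by linarith [hg.1], hg.2⟩, mul_assoc, ← exp_add]
  congr 2
  ring

lemma tendsto_sqrt_one_sub_sq_pow_card_pairs {g : ℕ → ℝ} {t : ℝ} (hg : Tendsto g atTop (nhds 0))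
    (hgt : Tendsto (fun n => n * g n) atTop (nhds t)) :
    Tendsto (fun n => √(1 - g n ^ 2) ^ Fintype.card (Pairs n)) atTop
      (nhds (exp (-t ^ 2 / 4))) := by
  have sq_tendsto : Tendsto (fun n => -g n ^ 2) atTop (nhds 0) := by simpa using (hg.pow 2).neg
  have card_mul : Tendsto (fun n : ℕ => (n * (n - 1) / 4 : ℝ) * -g n ^ 2) atTop
      (nhds (-t ^ 2 / 4)) := by
    have := ((hgt.pow 2).sub (hgt.mul hg)).neg.div_const 4
    rw [mul_zero, sub_zero] at this
    exact this.congr fun n => by ring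
  refine ((continuous_exp.tendsto _).comp (tendsto_mul_log_one_add sq_tendsto card_mul)).congr' ?_
  filter_upwards [sq_tendsto.eventually (lt_mem_nhds neg_one_lt_zero)] with n hn
  have pos : 0 < 1 - g n ^ 2 := by linarith
  rw [Function.comp_apply, ← sub_eq_add_neg, ← exp_log (sqrt_pos.2 pos), log_sqrt pos.le,
    ← exp_nat_mul, card_pairs]
  congr 1
  ring

theorem tendsto_curieWeiss {g : ℕ → ℝ} {t : ℝ} (ht : t < 1) (hg : ∀ᶠ n in atTop, 0 ≤ g n)
    (hgt : Tendsto (fun n => n * g n) atTop (nhds t)) :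
    Tendsto (fun n => curieWeiss n (g n)) atTop
      (nhds (exp (-t / 2 - t ^ 2 / 4) / √(1 - t))) := by
  have g_tendsto : Tendsto g atTop (nhds 0) := by
    have := hgt.mul tendsto_inv_atTop_nhds_zero_nat
    rw [mul_zero] at this
    refine this.congr' ?_
    filter_upwards [eventually_ne_atTop 0] with n hn
    field_simp
  have artanh_tendsto := tendsto_mul_artanh g_tendsto hgt
  have integral_tendsto := tendsto_integral_cosh_pow_gaussianReal (x := fun n => √(artanh (g n))) ht
    (artanh_tendsto.congr' (by
      filter_upwards [hg] with n hn
      rw [sq_sqrt (artanh_nonneg hn)]))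
  have limit := ((tendsto_sqrt_one_sub_sq_pow_card_pairs g_tendsto hgt).mul
    ((continuous_exp.tendsto _).comp (artanh_tendsto.neg.div_const 2))).mul integral_tendsto
  rw [← exp_add, mul_one_div, show -t ^ 2 / 4 + -t / 2 = -t / 2 - t ^ 2 / 4 by ring] at limit
  refine limit.congr' ?_
  filter_upwards [hg, g_tendsto.eventually (gt_mem_nhds one_pos)] with n h0 h1
  exact (curieWeiss_eq n ⟨h0, h1⟩).symm

end CurieWeiss

section PairCovariance

variable [Fintype L] {n : ℕ} {a b : ℝ} {μ ν : L → ℝ}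

/-- The centred fluctuation `X` of the likelihood factor of a pair, `W = 1 + X` for equal types and
`W = 1 - X` for different types. The exception is a label of mass zero, where the divisions by zero
make both `W` and `X` vanish. -/
noncomputable def likFluct (n : ℕ) (a b : ℝ) (μ ν : L → ℝ) : Option L → ℝ
  | some ℓ => (a * μ ℓ - b * ν ℓ) / (a * μ ℓ + b * ν ℓ)
  | none => -((a - b) / (2 * n)) / (1 - (a + b) / (2 * n))

/-- The variance `γ_n = E[X²]` of the likelihood factor of a single pair under the labeled
Erdős–Rényi model. It is also, up to sign, the covariance of the factors of two type assignments. -/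
noncomputable def likVar (n : ℕ) (a b : ℝ) (μ ν : L → ℝ) : ℝ :=
  ∑ o, erPairMass n a b μ ν o * likFluct n a b μ ν o ^ 2

omit [Fintype L] in
lemma erPairMass_some (hab : a + b ≠ 0) (ℓ : L) :
    erPairMass n a b μ ν (some ℓ) = (a * μ ℓ + b * ν ℓ) / (2 * n) := by
  rw [erPairMass]
  field_simp

omit [Fintype L] in
lemma erPairMass_mul_likPair (hq : 1 - (a + b) / (2 * n) ≠ 0) (s : Bool) (o : Option L) :
    erPairMass n a b μ ν o * likPair n a b μ ν s o =
      erPairMass n a b μ ν o * (1 + boolSign s * likFluct n a b μ ν o) := by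
  cases o with
  | none =>
    congr 1
    rw [likFluct, mul_div_assoc', one_add_div hq]
    cases s <;> simp only [likPair, boolSign, if_true, if_false, Bool.false_eq_true] <;>
      congr 1 <;> ring
  | some ℓ =>
    by_cases h : a * μ ℓ + b * ν ℓ = 0
    · simp [erPairMass, h]
    · congr 1
      rw [likFluct, mul_div_assoc', one_add_div h]
      cases s <;> simp only [likPair, boolSign, if_true, if_false, Bool.false_eq_true] <;>
        congr 1 <;> ring

lemma sum_erPairMass (hab : a + b ≠ 0) (hμ : ∑ ℓ, μ ℓ = 1) (hν : ∑ ℓ, ν ℓ = 1) :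
    ∑ o, erPairMass n a b μ ν o = 1 := by
  have non_edge : erPairMass n a b μ ν none = 1 - (a + b) / (2 * n) := rfl
  simp only [Fintype.sum_option, erPairMass_some hab, ← sum_div, sum_add_distrib, ← mul_sum, hμ, hν,
    non_edge]
  ring

lemma sum_erPairMass_mul_likFluct (ha : 0 < a) (hb : 0 < b) (hμ : IsProbVec μ) (hν : IsProbVec ν)
    (hq : 1 - (a + b) / (2 * n) ≠ 0) :
    ∑ o, erPairMass n a b μ ν o * likFluct n a b μ ν o = 0 := by
  have edge (ℓ : L) : erPairMass n a b μ ν (some ℓ) * likFluct n a b μ ν (some ℓ) =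
      (a * μ ℓ - b * ν ℓ) / (2 * n) := by
    have ha_mass : 0 ≤ a * μ ℓ := mul_nonneg ha.le (hμ.1 ℓ)
    have hb_mass : 0 ≤ b * ν ℓ := mul_nonneg hb.le (hν.1 ℓ)
    rw [erPairMass_some (by positivity), likFluct, div_mul_eq_mul_div]
    congr 1
    refine mul_div_cancel_of_imp' fun h => ?_
    linarith
  have non_edge : erPairMass n a b μ ν none * likFluct n a b μ ν none = -((a - b) / (2 * n)) :=
    mul_div_cancel₀ _ hq
  rw [Fintype.sum_option, non_edge]
  simp only [edge, ← sum_div, sum_sub_distrib, ← mul_sum, hμ.2, hν.2]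
  ring

lemma likVar_eq (hab : a + b ≠ 0) :
    likVar n a b μ ν =
      tau a b μ ν / n + ((a - b) / (2 * n)) ^ 2 / (1 - (a + b) / (2 * n)) := by
  have edge (ℓ : L) : erPairMass n a b μ ν (some ℓ) * likFluct n a b μ ν (some ℓ) ^ 2 =
      (a * μ ℓ - b * ν ℓ) ^ 2 / (2 * (a * μ ℓ + b * ν ℓ)) / n := by
    rw [erPairMass_some hab, likFluct]
    by_cases h : a * μ ℓ + b * ν ℓ = 0
    · simp [h]
    · field_simp
  have non_edge : erPairMass n a b μ ν none * likFluct n a b μ ν none ^ 2 =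
      ((a - b) / (2 * n)) ^ 2 / (1 - (a + b) / (2 * n)) := by
    rw [erPairMass, likFluct]
    generalize 1 - (a + b) / (2 * (n : ℝ)) = q
    field_simp
  rw [likVar, Fintype.sum_option, non_edge, add_comm]
  simp only [edge, ← sum_div, tau]

lemma sum_erPairMass_mul_likPair_mul_likPair (ha : 0 < a) (hb : 0 < b) (hμ : IsProbVec μ)
    (hν : IsProbVec ν) (hq : 1 - (a + b) / (2 * n) ≠ 0) (s t : Bool) :
    ∑ o, erPairMass n a b μ ν o * (likPair n a b μ ν s o * likPair n a b μ ν t o) =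
      1 + likVar n a b μ ν * (boolSign s * boolSign t) := by
  have expand (o : Option L) :
      erPairMass n a b μ ν o * (likPair n a b μ ν s o * likPair n a b μ ν t o) =
        erPairMass n a b μ ν o +
          erPairMass n a b μ ν o * likFluct n a b μ ν o * (boolSign s + boolSign t) +
          erPairMass n a b μ ν o * likFluct n a b μ ν o ^ 2 * (boolSign s * boolSign t) := by
    rw [← mul_assoc, erPairMass_mul_likPair hq, mul_right_comm, erPairMass_mul_likPair hq]
    ring
  simp only [expand, sum_add_distrib, ← sum_mul]
  rw [sum_erPairMass (by positivity) hμ.2 hν.2, sum_erPairMass_mul_likFluct ha hb hμ hν hq,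
    zero_mul, add_zero, likVar]

end PairCovariance

section SecondMoment

variable [Fintype L] {n : ℕ} {a b : ℝ} {μ ν : L → ℝ}

lemma erExp_prod (f : Pairs n → Option L → ℝ) :
    erExp n a b μ ν (fun E => ∏ p, f p (E p)) = ∏ p, ∑ o, erPairMass n a b μ ν o * f p o := by
  simp only [erExp, erMass, ← prod_mul_distrib]
  exact (Fintype.prod_sum fun p o => erPairMass n a b μ ν o * f p o).symm

lemma erExp_Ylik_sq_eq_sum_prod :
    erExp n a b μ ν (fun E => Ylik n a b μ ν E ^ 2) =
      (1 / 2 : ℝ) ^ n * ((1 / 2 : ℝ) ^ n * ∑ σ : Fin n → Bool, ∑ ρ : Fin n → Bool,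
        ∏ p : Pairs n, ∑ o, erPairMass n a b μ ν o *
          (likPair n a b μ ν (σ p.1.1 == σ p.1.2) o *
            likPair n a b μ ν (ρ p.1.1 == ρ p.1.2) o)) := by
  have Ylik_sq (E : EdgeConf n L) : Ylik n a b μ ν E ^ 2 =
      (1 / 2 : ℝ) ^ n * ((1 / 2 : ℝ) ^ n * ∑ σ : Fin n → Bool, ∑ ρ : Fin n → Bool,
        ∏ p : Pairs n, (likPair n a b μ ν (σ p.1.1 == σ p.1.2) (E p) *
          likPair n a b μ ν (ρ p.1.1 == ρ p.1.2) (E p))) := by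
    rw [Ylik, sq, mul_mul_mul_comm, mul_assoc, sum_mul_sum]
    simp only [prod_mul_distrib]
  simp only [← erExp_prod, Ylik_sq, erExp, mul_left_comm (erMass _ _ _ _ _ _), ← mul_sum]
  congr 2
  simp only [mul_sum]
  rw [sum_comm]
  exact sum_congr rfl fun σ _ => sum_comm

lemma erExp_Ylik_sq (ha : 0 < a) (hb : 0 < b) (hμ : IsProbVec μ) (hν : IsProbVec ν)
    (hq : 1 - (a + b) / (2 * n) ≠ 0) :
    erExp n a b μ ν (fun E => Ylik n a b μ ν E ^ 2) = curieWeiss n (likVar n a b μ ν) := by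
  have overlap_sign (σ ρ : Fin n → Bool) (u v : Fin n) :
      boolSign (σ u == σ v) * boolSign (ρ u == ρ v) =
        signVec (fun w => σ w == ρ w) u * signVec (fun w => σ w == ρ w) v := by
    simp only [signVec_apply, boolSign_beq]
    ring
  rw [erExp_Ylik_sq_eq_sum_prod, curieWeiss]
  simp only [sum_erPairMass_mul_likPair_mul_likPair ha hb hμ hν hq, overlap_sign]
  rw [sum_sum_beq fun η => ∏ p : Pairs n,
    (1 + likVar n a b μ ν * (signVec η p.1.1 * signVec η p.1.2)), Fintype.card_fin, nsmul_eq_mul,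
    ← mul_assoc ((1 / 2 : ℝ) ^ n) _ (∑ _, _), Nat.cast_pow, ← mul_pow]
  norm_num

lemma tau_nonneg (ha : 0 ≤ a) (hb : 0 ≤ b) (hμ : ∀ ℓ, 0 ≤ μ ℓ) (hν : ∀ ℓ, 0 ≤ ν ℓ) :
    0 ≤ tau a b μ ν := by
  refine sum_nonneg fun ℓ _ => ?_
  have := hμ ℓ
  have := hν ℓ
  positivity

lemma tendsto_one_sub_div_two_mul_natCast (c : ℝ) :
    Tendsto (fun n : ℕ => 1 - c / (2 * n)) atTop (nhds 1) := by
  simpa [div_div] using (tendsto_const_div_atTop_nhds_zero_nat (c / 2)).const_sub 1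

lemma tendsto_mul_likVar (hab : a + b ≠ 0) :
    Tendsto (fun n : ℕ => n * likVar n a b μ ν) atTop (nhds (tau a b μ ν)) := by
  have correction : Tendsto (fun n : ℕ => ((a - b) / 2) ^ 2 / n / (1 - (a + b) / (2 * n))) atTop
      (nhds 0) := by
    simpa [Pi.div_def] using (tendsto_const_div_atTop_nhds_zero_nat (((a - b) / 2) ^ 2)).div
      (tendsto_one_sub_div_two_mul_natCast (a + b)) one_ne_zero
  have limit := correction.const_add (tau a b μ ν)
  rw [add_zero] at limit
  refine limit.congr' ?_
  filter_upwards [eventually_ne_atTop 0] with n hn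
  have : (n : ℝ) ≠ 0 := Nat.cast_ne_zero.2 hn
  rw [likVar_eq hab]
  generalize 1 - (a + b) / (2 * (n : ℝ)) = q
  field_simp

end SecondMoment

/-- **Proposition (Limit of the second moment of the likelihood ratio).**
If `τ < 1`, then `E_{ℙ'_n}[Y_n²] → exp(−τ/2 − τ²/4)/√(1 − τ)` as `n → ∞`, where
`Y_n = ℙ_n/ℙ'_n` is the likelihood ratio of the labeled SBM with respect to the
labeled Erdős–Rényi model. -/
theorem second_moment_limit
    {L : Type*} [Fintype L] (a b : ℝ) (ha : 0 < a) (hb : 0 < b)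
    (μ ν : L → ℝ) (hμ : IsProbVec μ) (hν : IsProbVec ν)
    (htau : tau a b μ ν < 1) :
    Filter.Tendsto (fun n : ℕ => erExp n a b μ ν (fun E => (Ylik n a b μ ν E) ^ 2))
      Filter.atTop
      (nhds (Real.exp (-(tau a b μ ν) / 2 - (tau a b μ ν) ^ 2 / 4) /
        Real.sqrt (1 - tau a b μ ν))) := by
  have non_edge_pos : ∀ᶠ n : ℕ in atTop, 0 < 1 - (a + b) / (2 * (n : ℝ)) :=
    (tendsto_one_sub_div_two_mul_natCast (a + b)).eventually (lt_mem_nhds one_pos)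
  have likVar_nonneg : ∀ᶠ n : ℕ in atTop, 0 ≤ likVar n a b μ ν := by
    filter_upwards [non_edge_pos] with n hn
    have := tau_nonneg ha.le hb.le hμ.1 hν.1
    rw [likVar_eq (by positivity)]
    positivity
  refine (tendsto_curieWeiss htau likVar_nonneg (tendsto_mul_likVar (by positivity))).congr' ?_
  filter_upwards [non_edge_pos] with n hn
  exact (erExp_Ylik_sq ha hb hμ hν hn.ne').symm

end LSBM
end
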